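/- arXiv:1312.2582 — 4 statements merged into one kernel-verified Lean document; each statement's English description precedes it below -/
import Mathlib

section
/- Let 0 < λ < 1 and let φ : ℝ → ℝ be compactly supported and Hölder continuous with exponent λ (there is M > 0 with |φ(x) − φ(y)| ≤ M·|x − y|^λ for all x, y). Then for every x ∈ ℝ, the limit as a → +∞ of (a/π)·∫_{−∞}^{∞} S_a(x − t)·φ(t) dt exists and equals −(1/π) times the Cauchy principal value lim_{ε→0⁺} ∫_{|t−x|>ε} φ(t)/(x − t) dt. (In other words, as a → ∞ the kernel of the operator (a/π)·(S_a ∗ ·) reduces to the Cauchy kernel.) -/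
open Filter MeasureTheory Topology

/-- The sine integral `si(x) = -∫_x^∞ sin t / t dt`, defined via the improper
(limit of interval integrals) form. -/
noncomputable def si (x : ℝ) : ℝ :=
  - limUnder Filter.atTop (fun R : ℝ => ∫ t in x..R, Real.sin t / t)

/-- The cosine integral `ci(x) = -∫_x^∞ cos t / t dt`, defined via the improper
(limit of interval integrals) form. -/
noncomputable def ci (x : ℝ) : ℝ :=
  - limUnder Filter.atTop (fun R : ℝ => ∫ t in x..R, Real.cos t / t)

/-- The kernel `S_a(x) = sign(x) (si(a|x|) cos(a|x|) - ci(a|x|) sin(a|x|))`, with `S_a(0)=0`. -/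
noncomputable def Sker (a x : ℝ) : ℝ :=
  Real.sign x * (si (a * |x|) * Real.cos (a * |x|) - ci (a * |x|) * Real.sin (a * |x|))

/-- The kernel `T_a(x) = si(a|x|) sin(a|x|) + ci(a|x|) cos(a|x|)`. -/
noncomputable def Tker (a x : ℝ) : ℝ :=
  si (a * |x|) * Real.sin (a * |x|) + ci (a * |x|) * Real.cos (a * |x|)

/-!
The oscillating kernel is a Laplace transform in disguise. With `f(u) = ∫_0^∞ e^{-us} / (1 + s²) ds`
and `g(u) = ∫_0^∞ s e^{-us} / (1 + s²) ds`, the functions `-(f cos + g sin)` and `f sin - g cos` are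
antiderivatives of `sin t / t` and `cos t / t` that vanish at infinity, so they are `si` and `ci`,
and `S_a(x) = -sign(x) f(a|x|)`. Hence `y · a S_a(y) = -(a|y|) f(a|y|)` is bounded by `1` and tends
to `-1` as `a → ∞`; likewise `y` times the truncation of `1 / y` to `|y| > ε` is bounded by `1` and
tends to `1` as `ε → 0`. For any such family of odd kernels, folding the convolution about `x` turns
it into an integral against `(φ(x - y) - φ(x + y)) / y`, which is integrable for compactly supported
Hölder `φ`, and dominated convergence gives the limit.
-/

section Laplace

open Set Real

variable {w : ℝ → ℝ} {C u : ℝ}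

/-- The Laplace transform `u ↦ ∫_0^∞ w(s) e^{-us} ds` of a real function, with junk
value `0` where the integrand is not integrable. -/
noncomputable def laplace (w : ℝ → ℝ) (u : ℝ) : ℝ :=
  ∫ s in Ioi 0, w s * exp (-u * s)

lemma integrableOn_mul_exp_neg_mul (hw : Measurable w) (hC : ∀ s, |w s| ≤ C) (hu : 0 < u) :
    IntegrableOn (fun s => w s * exp (-u * s)) (Ioi 0) :=
  (integrableOn_exp_mul_Ioi (neg_lt_zero.2 hu) 0).bdd_mul hw.aestronglyMeasurable
    (ae_of_all _ hC)

lemma laplace_one (hu : 0 < u) : laplace (fun _ => 1) u = 1 / u := by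
  simp only [laplace, one_mul, integral_exp_mul_Ioi (neg_lt_zero.2 hu), mul_zero, exp_zero,
    neg_div_neg_eq]

lemma abs_laplace_le (hC : ∀ s, |w s| ≤ C) (hu : 0 < u) : |laplace w u| ≤ C / u :=
  calc |laplace w u| ≤ ∫ s in Ioi 0, C * exp (-u * s) := by
        rw [← norm_eq_abs]
        refine norm_integral_le_of_norm_le
          ((integrableOn_exp_mul_Ioi (neg_lt_zero.2 hu) 0).const_mul C) (ae_of_all _ fun s => ?_)
        rw [norm_mul, norm_of_nonneg (exp_pos _).le]
        gcongr
        exact hC s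
    _ = C * laplace (fun _ => 1) u := by simp only [laplace, one_mul, integral_const_mul]
    _ = C / u := by rw [laplace_one hu, mul_one_div]

lemma tendsto_laplace_atTop_zero (hC : ∀ s, |w s| ≤ C) : Tendsto (laplace w) atTop (𝓝 0) := by
  refine squeeze_zero_norm' ?_ (tendsto_const_nhds.div_atTop tendsto_id : Tendsto (C / ·) _ _)
  filter_upwards [eventually_gt_atTop 0] with u hu using abs_laplace_le hC hu

lemma measurable_laplace (hw : Measurable w) : Measurable (laplace w) := by
  have h : StronglyMeasurable fun z : ℝ × ℝ => w z.2 * exp (-z.1 * z.2) :=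
    Measurable.stronglyMeasurable (by fun_prop)
  exact (h.integral_prod_right' (ν := volume.restrict (Ioi 0))).measurable

lemma hasDerivAt_laplace (hw : Measurable w) (hC : ∀ s, |w s| ≤ C) (hu : 0 < u) :
    HasDerivAt (laplace w) (-laplace (fun s => s * w s) u) u := by
  have hdom : IntegrableOn (fun s => C * (s * exp (-(u / 2) * s))) (Ioi 0) := by
    have h := integrableOn_rpow_mul_exp_neg_mul_rpow (s := 1) (by norm_num) one_pos (half_pos hu)
    simp only [rpow_one] at h
    exact h.const_mul C
  have hderiv (s v : ℝ) :
      HasDerivAt (fun v => w s * exp (-v * s)) (-(s * w s * exp (-v * s))) v := by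
    convert! (((hasDerivAt_id v).neg.mul_const s).exp.const_mul (w s)) using 1
    simp only [Pi.neg_apply, id]
    ring
  have h := (hasDerivAt_integral_of_dominated_loc_of_deriv_le (μ := volume.restrict (Ioi 0))
    (F := fun v s => w s * exp (-v * s)) (F' := fun v s => -(s * w s * exp (-v * s)))
    (Ioi_mem_nhds (half_lt_self hu))
    (Eventually.of_forall fun v => Measurable.aestronglyMeasurable (by fun_prop))
    (integrableOn_mul_exp_neg_mul hw hC hu)
    (Measurable.aestronglyMeasurable (by fun_prop)) ?_ hdom
    (ae_of_all _ fun s v _ => hderiv s v)).2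
  · rwa [integral_neg] at h
  · filter_upwards [ae_restrict_mem measurableSet_Ioi] with s hs v hv
    have hs0 : 0 < s := hs
    calc ‖-(s * w s * exp (-v * s))‖ = |w s| * (s * exp (-v * s)) := by
          rw [norm_neg, norm_mul, norm_mul, norm_of_nonneg hs0.le, norm_of_nonneg (exp_pos _).le,
            norm_eq_abs]
          ring
      _ ≤ C * (s * exp (-(u / 2) * s)) := by
          have := (abs_nonneg _).trans (hC s)
          gcongr
          exacts [hC s, (mem_Ioi.1 hv).le]

lemma tendsto_mul_laplace_atTop {b : ℝ} (hw : Measurable w) (hC : ∀ s, |w s| ≤ C)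
    (hb : Tendsto w (𝓝[>] 0) (𝓝 b)) : Tendsto (fun u => u * laplace w u) atTop (𝓝 b) := by
  have hscale {u : ℝ} (hu : 0 < u) : u * laplace w u = ∫ s in Ioi 0, w (u⁻¹ * s) * exp (-s) := by
    have h := integral_comp_mul_left_Ioi (fun s => w s * exp (-u * s)) 0 (inv_pos.2 hu)
    simp only [mul_zero, inv_inv, smul_eq_mul, neg_mul, mul_inv_cancel_left₀ hu.ne'] at h
    simp only [laplace, neg_mul, h]
  have hlim : Tendsto (fun u => ∫ s in Ioi 0, w (u⁻¹ * s) * exp (-s)) atTop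
      (𝓝 (∫ s in Ioi 0, b * exp (-s))) := by
    refine tendsto_integral_filter_of_dominated_convergence (fun s => C * exp (-s))
      (Eventually.of_forall fun u => Measurable.aestronglyMeasurable (by fun_prop))
      (Eventually.of_forall fun u => ae_of_all _ fun s => ?_)
      ((integrableOn_exp_neg_Ioi 0).const_mul C) ?_
    · rw [norm_mul, norm_of_nonneg (exp_pos _).le]
      gcongr
      exact hC _
    · filter_upwards [ae_restrict_mem measurableSet_Ioi] with s hs
      refine (hb.comp (tendsto_nhdsWithin_iff.2 ⟨?_, ?_⟩)).mul_const _
      · simpa using tendsto_inv_atTop_zero.mul_const s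
      · filter_upwards [eventually_gt_atTop 0] with u hu using mul_pos (inv_pos.2 hu) hs
  rw [integral_const_mul, integral_exp_neg_Ioi_zero, mul_one] at hlim
  refine hlim.congr' ?_
  filter_upwards [eventually_gt_atTop 0] with u hu using (hscale hu).symm

end Laplace

section AuxiliaryFunctions

open Set Real

variable {u : ℝ}

/-- The auxiliary function `f(u) = ∫_0^∞ e^{-us} / (1 + s²) ds` of the sine and cosine integrals
(DLMF 6.7.13); the kernel `S_a(x)` equals `-sign(x) f(a|x|)`. -/
noncomputable def trigAuxF : ℝ → ℝ := laplace fun s => (1 + s ^ 2)⁻¹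

/-- The auxiliary function `g(u) = ∫_0^∞ s e^{-us} / (1 + s²) ds` of the sine and cosine integrals
(DLMF 6.7.14); it is minus the derivative of `trigAuxF`. -/
noncomputable def trigAuxG : ℝ → ℝ := laplace fun s => s * (1 + s ^ 2)⁻¹

lemma abs_inv_one_add_sq_le_one (s : ℝ) : |(1 + s ^ 2)⁻¹| ≤ 1 := by
  rw [abs_of_pos (by positivity)]
  exact inv_le_one_of_one_le₀ (by nlinarith [sq_nonneg s])

lemma abs_mul_inv_one_add_sq_le_one (s : ℝ) : |s * (1 + s ^ 2)⁻¹| ≤ 1 := by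
  rw [← div_eq_mul_inv, abs_div, abs_of_pos (by positivity : 0 < 1 + s ^ 2)]
  refine div_le_one_of_le₀ ?_ (by positivity)
  nlinarith [sq_nonneg (|s| - 1), sq_abs s, sq_nonneg s]

lemma hasDerivAt_trigAuxF (hu : 0 < u) : HasDerivAt trigAuxF (-trigAuxG u) u :=
  hasDerivAt_laplace (by fun_prop) abs_inv_one_add_sq_le_one hu

lemma hasDerivAt_trigAuxG (hu : 0 < u) : HasDerivAt trigAuxG (trigAuxF u - 1 / u) u := by
  have h : laplace (fun s => s * (s * (1 + s ^ 2)⁻¹)) u = 1 / u - trigAuxF u := by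
    rw [← laplace_one hu, trigAuxF, laplace, laplace, laplace, ← integral_sub
      (integrableOn_mul_exp_neg_mul measurable_const (fun _ => abs_one.le) hu)
      (integrableOn_mul_exp_neg_mul (by fun_prop) abs_inv_one_add_sq_le_one hu)]
    congr 1 with s
    have : 1 + s ^ 2 ≠ 0 := by positivity
    field_simp
    ring
  convert! hasDerivAt_laplace (by fun_prop) abs_mul_inv_one_add_sq_le_one hu using 1
  rw [h, neg_sub]

lemma tendsto_trigAuxF_atTop_zero : Tendsto trigAuxF atTop (𝓝 0) :=
  tendsto_laplace_atTop_zero abs_inv_one_add_sq_le_one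

lemma tendsto_trigAuxG_atTop_zero : Tendsto trigAuxG atTop (𝓝 0) :=
  tendsto_laplace_atTop_zero abs_mul_inv_one_add_sq_le_one

lemma measurable_trigAuxF : Measurable trigAuxF :=
  measurable_laplace (by fun_prop)

lemma abs_trigAuxF_le (hu : 0 ≤ u) : |trigAuxF u| ≤ π / 2 :=
  calc |trigAuxF u| ≤ ∫ s in Ioi 0, (1 + s ^ 2)⁻¹ := by
        rw [← norm_eq_abs]
        refine norm_integral_le_of_norm_le integrable_inv_one_add_sq.integrableOn ?_
        filter_upwards [ae_restrict_mem measurableSet_Ioi] with s hs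
        have hexp : exp (-u * s) ≤ 1 := exp_le_one_iff.2 (by nlinarith [mem_Ioi.1 hs])
        rw [norm_of_nonneg (by positivity)]
        exact mul_le_of_le_one_right (by positivity) hexp
    _ = π / 2 := by simp

lemma abs_mul_trigAuxF_le_one (hu : 0 ≤ u) : |u * trigAuxF u| ≤ 1 := by
  rcases hu.eq_or_lt with rfl | hu
  · simp
  · rw [abs_mul, abs_of_pos hu, ← le_div_iff₀' hu]
    exact abs_laplace_le abs_inv_one_add_sq_le_one hu

lemma tendsto_mul_trigAuxF_atTop : Tendsto (fun u => u * trigAuxF u) atTop (𝓝 1) := by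
  have h : ContinuousAt (fun s : ℝ => (1 + s ^ 2)⁻¹) 0 :=
    ContinuousAt.inv₀ (by fun_prop) (by norm_num)
  refine tendsto_mul_laplace_atTop (by fun_prop) abs_inv_one_add_sq_le_one ?_
  simpa using h.tendsto.mono_left nhdsWithin_le_nhds

end AuxiliaryFunctions

section SineCosineIntegrals

open Set Real

variable {u : ℝ}

lemma tendsto_intervalIntegral_atTop_of_hasDerivAt {F f : ℝ → ℝ} {l : ℝ}
    (hF : ∀ t ∈ Ici u, HasDerivAt F (f t) t) (hf : ContinuousOn f (Ici u))
    (hl : Tendsto F atTop (𝓝 l)) : Tendsto (fun R => ∫ t in u..R, f t) atTop (𝓝 (l - F u)) := by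
  refine (hl.sub_const (F u)).congr' ?_
  filter_upwards [eventually_ge_atTop u] with R hR
  have hsub : uIcc u R ⊆ Ici u := by
    rw [uIcc_of_le hR]
    exact Icc_subset_Ici_self
  exact (intervalIntegral.integral_eq_sub_of_hasDerivAt (fun t ht => hF t (hsub ht))
    (hf.mono hsub).intervalIntegrable).symm

lemma isBoundedUnder_norm_cos {l : Filter ℝ} : IsBoundedUnder (· ≤ ·) l (norm ∘ cos) :=
  isBoundedUnder_of ⟨1, abs_cos_le_one⟩

lemma isBoundedUnder_norm_sin {l : Filter ℝ} : IsBoundedUnder (· ≤ ·) l (norm ∘ sin) :=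
  isBoundedUnder_of ⟨1, abs_sin_le_one⟩

lemma si_eq (hu : 0 < u) : si u = -(trigAuxF u * cos u + trigAuxG u * sin u) := by
  have hderiv (t : ℝ) (ht : t ∈ Ici u) :
      HasDerivAt (fun t => -(trigAuxF t * cos t + trigAuxG t * sin t)) (sin t / t) t := by
    have ht0 : 0 < t := hu.trans_le ht
    convert! (((hasDerivAt_trigAuxF ht0).mul (hasDerivAt_cos t)).add
      ((hasDerivAt_trigAuxG ht0).mul (hasDerivAt_sin t))).neg using 1
    ring
  have hlim : Tendsto (fun t => -(trigAuxF t * cos t + trigAuxG t * sin t)) atTop (𝓝 0) := by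
    simpa only [add_zero, neg_zero] using
      ((tendsto_trigAuxF_atTop_zero.zero_mul_isBoundedUnder_le isBoundedUnder_norm_cos).add
        (tendsto_trigAuxG_atTop_zero.zero_mul_isBoundedUnder_le isBoundedUnder_norm_sin)).neg
  have hcont : ContinuousOn (fun t => sin t / t) (Ici u) :=
    continuousOn_sin.div continuousOn_id fun t ht => (hu.trans_le ht).ne'
  rw [si, (tendsto_intervalIntegral_atTop_of_hasDerivAt hderiv hcont hlim).limUnder_eq]
  ring

lemma ci_eq (hu : 0 < u) : ci u = trigAuxF u * sin u - trigAuxG u * cos u := by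
  have hderiv (t : ℝ) (ht : t ∈ Ici u) :
      HasDerivAt (fun t => trigAuxF t * sin t - trigAuxG t * cos t) (cos t / t) t := by
    have ht0 : 0 < t := hu.trans_le ht
    convert! ((hasDerivAt_trigAuxF ht0).mul (hasDerivAt_sin t)).sub
      ((hasDerivAt_trigAuxG ht0).mul (hasDerivAt_cos t)) using 1
    ring
  have hlim : Tendsto (fun t => trigAuxF t * sin t - trigAuxG t * cos t) atTop (𝓝 0) := by
    simpa only [sub_zero] using
      (tendsto_trigAuxF_atTop_zero.zero_mul_isBoundedUnder_le isBoundedUnder_norm_sin).sub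
        (tendsto_trigAuxG_atTop_zero.zero_mul_isBoundedUnder_le isBoundedUnder_norm_cos)
  have hcont : ContinuousOn (fun t => cos t / t) (Ici u) :=
    continuousOn_cos.div continuousOn_id fun t ht => (hu.trans_le ht).ne'
  rw [ci, (tendsto_intervalIntegral_atTop_of_hasDerivAt hderiv hcont hlim).limUnder_eq]
  ring

lemma si_mul_cos_sub_ci_mul_sin (hu : 0 < u) : si u * cos u - ci u * sin u = -trigAuxF u := by
  rw [si_eq hu, ci_eq hu]
  linear_combination -trigAuxF u * sin_sq_add_cos_sq u

end SineCosineIntegrals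

section Kernel

variable {a : ℝ}

lemma Sker_eq (ha : 0 < a) (y : ℝ) : Sker a y = -(Real.sign y * trigAuxF (a * |y|)) := by
  rcases eq_or_ne y 0 with rfl | hy
  · simp [Sker]
  · rw [Sker, si_mul_cos_sub_ci_mul_sin (by positivity), mul_neg]

lemma mul_mul_Sker (ha : 0 < a) (y : ℝ) :
    y * (a * Sker a y) = -(a * |y| * trigAuxF (a * |y|)) := by
  have hy : y * Real.sign y = |y| := by
    rcases lt_trichotomy y 0 with h | rfl | h
    · simp [Real.sign_of_neg h, abs_of_neg h]
    · simp
    · simp [Real.sign_of_pos h, abs_of_pos h]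
  rw [Sker_eq ha]
  linear_combination -(a * trigAuxF (a * |y|)) * hy

lemma odd_Sker (a : ℝ) : Function.Odd (Sker a) := fun y => by
  simp [Sker, Real.sign_neg]

lemma measurable_Sker (ha : 0 < a) : Measurable (Sker a) := by
  have hsign : Measurable Real.sign :=
    Measurable.ite measurableSet_Iio measurable_const
      (Measurable.ite measurableSet_Ioi measurable_const measurable_const)
  rw [funext (Sker_eq ha)]
  exact (hsign.mul (measurable_trigAuxF.comp (by fun_prop))).neg

lemma abs_Sker_le (ha : 0 < a) (y : ℝ) : |Sker a y| ≤ Real.pi / 2 := by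
  have hsign : |Real.sign y| ≤ 1 := by
    rcases Real.sign_apply_eq y with h | h | h <;> simp [h]
  rw [Sker_eq ha, abs_neg, abs_mul]
  exact (mul_le_of_le_one_left (abs_nonneg _) hsign).trans (abs_trigAuxF_le (by positivity))

lemma abs_mul_mul_Sker_le_one (ha : 0 < a) (y : ℝ) : |y * (a * Sker a y)| ≤ 1 := by
  rw [mul_mul_Sker ha, abs_neg]
  exact abs_mul_trigAuxF_le_one (by positivity)

lemma tendsto_mul_mul_Sker {y : ℝ} (hy : y ≠ 0) :
    Tendsto (fun a => y * (a * Sker a y)) atTop (𝓝 (-1)) := by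
  refine ((tendsto_mul_trigAuxF_atTop.comp
    (tendsto_id.atTop_mul_const (abs_pos.2 hy))).neg).congr' ?_
  filter_upwards [eventually_gt_atTop 0] with a ha using (mul_mul_Sker ha y).symm

end Kernel

section TruncatedInverse

variable {ε : ℝ}

/-- The Cauchy kernel `1 / y` cut off to `|y| > ε`, whose convolutions define the principal
value. -/
noncomputable def truncInv (ε : ℝ) : ℝ → ℝ := {y | ε < |y|}.indicator Inv.inv

lemma odd_truncInv (ε : ℝ) : Function.Odd (truncInv ε) := fun y => by
  by_cases hy : ε < |y| <;> simp [truncInv, hy]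

lemma measurable_truncInv (ε : ℝ) : Measurable (truncInv ε) :=
  measurable_inv.indicator (measurableSet_lt measurable_const (by fun_prop))

lemma abs_truncInv_le (hε : 0 < ε) (y : ℝ) : |truncInv ε y| ≤ ε⁻¹ := by
  by_cases hy : ε < |y|
  · simpa [truncInv, hy] using inv_anti₀ hε hy.le
  · simpa [truncInv, hy] using hε.le

lemma abs_mul_truncInv_le_one (ε y : ℝ) : |y * truncInv ε y| ≤ 1 := by
  by_cases hy : ε < |y|
  · simpa [truncInv, hy] using mul_inv_le_one
  · simp [truncInv, hy]

lemma tendsto_mul_truncInv {y : ℝ} (hy : y ≠ 0) :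
    Tendsto (fun ε => y * truncInv ε y) (𝓝 0) (𝓝 1) := by
  refine tendsto_const_nhds.congr' ?_
  filter_upwards [Iio_mem_nhds (abs_pos.2 hy)] with ε hε
  simp [truncInv, Set.mem_Iio.1 hε, hy]

end TruncatedInverse

section OddKernel

variable {E : Type*} [NormedAddCommGroup E] [NormedSpace ℝ E] {φ : ℝ → E} {x : ℝ}

/-- The symmetric difference quotient `(φ(x - y) - φ(x + y)) / y`. Its integrability in `y` is
Dini's condition at `x`. -/
noncomputable def symmQuotient (φ : ℝ → E) (x y : ℝ) : E := y⁻¹ • (φ (x - y) - φ (x + y))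

/-- The principal value of `∫ φ(t) / (x - t) dt`, encoded as half the integral over the whole line
of the even function `symmQuotient φ x`. -/
noncomputable def cauchyPV (φ : ℝ → E) (x : ℝ) : E := (1 / 2 : ℝ) • ∫ y, symmQuotient φ x y

lemma integral_odd_kernel_smul {k : ℝ → ℝ} {C : ℝ} (hk : Measurable k) (hodd : Function.Odd k)
    (hC : ∀ y, |k y| ≤ C) (hφ : Integrable φ) (x : ℝ) :
    ∫ t, k (x - t) • φ t = (1 / 2 : ℝ) • ∫ y, (y * k y) • symmQuotient φ x y := by
  have hsub : Integrable fun y => k y • φ (x - y) :=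
    (hφ.comp_sub_left x).bdd_smul C hk.aestronglyMeasurable (ae_of_all _ hC)
  have hadd : Integrable fun y => k y • φ (x + y) :=
    (hφ.comp_add_left x).bdd_smul C hk.aestronglyMeasurable (ae_of_all _ hC)
  have hleft : ∫ y, k y • φ (x - y) = ∫ t, k (x - t) • φ t := by
    rw [← integral_sub_left_eq_self (fun y => k y • φ (x - y)) volume x]
    simp only [sub_sub_cancel]
  have hright : ∫ y, k y • φ (x + y) = -∫ t, k (x - t) • φ t := by
    rw [← hleft, ← integral_neg_eq_self, ← integral_neg]
    simp only [hodd _, neg_smul, sub_eq_add_neg]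
  have hquot : ∫ y, (y * k y) • symmQuotient φ x y = ∫ y, (k y • φ (x - y) - k y • φ (x + y)) := by
    refine integral_congr_ae ?_
    filter_upwards [Measure.ae_ne volume 0] with y hy
    rw [symmQuotient, smul_smul, mul_right_comm, mul_inv_cancel₀ hy, one_mul, smul_sub]
  rw [hquot, integral_sub hsub hadd, hleft, hright]
  module

theorem tendsto_integral_odd_kernel_smul {ι : Type*} {l : Filter ι} [l.IsCountablyGenerated]
    {K : ι → ℝ → ℝ} {B c : ℝ} (hmeas : ∀ᶠ i in l, Measurable (K i))
    (hodd : ∀ᶠ i in l, Function.Odd (K i)) (hbdd : ∀ᶠ i in l, ∃ C, ∀ y, |K i y| ≤ C)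
    (hB : ∀ᶠ i in l, ∀ y, |y * K i y| ≤ B)
    (hlim : ∀ y ≠ 0, Tendsto (fun i => y * K i y) l (𝓝 c))
    (hφ : Integrable φ) (hquot : Integrable (symmQuotient φ x)) :
    Tendsto (fun i => ∫ t, K i (x - t) • φ t) l (𝓝 (c • cauchyPV φ x)) := by
  have h : Tendsto (fun i => ∫ y, (y * K i y) • symmQuotient φ x y) l
      (𝓝 (∫ y, c • symmQuotient φ x y)) := by
    refine tendsto_integral_filter_of_dominated_convergence (fun y => B * ‖symmQuotient φ x y‖)
      ?_ ?_ (hquot.norm.const_mul B) ?_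
    · filter_upwards [hmeas] with i hi
      exact (measurable_id.mul hi).aestronglyMeasurable.smul hquot.aestronglyMeasurable
    · filter_upwards [hB] with i hi
      refine ae_of_all _ fun y => ?_
      rw [norm_smul]
      gcongr
      exact hi y
    · filter_upwards [Measure.ae_ne volume 0] with y hy
      exact (hlim y hy).smul_const _
  rw [integral_smul] at h
  rw [cauchyPV, smul_comm]
  refine (h.const_smul (1 / 2 : ℝ)).congr' ?_
  filter_upwards [hmeas, hodd, hbdd] with i hm ho ⟨C, hC⟩
  exact (integral_odd_kernel_smul hm ho hC hφ x).symm

theorem tendsto_setIntegral_inv_smul_cauchyPV (hφ : Integrable φ)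
    (hquot : Integrable (symmQuotient φ x)) :
    Tendsto (fun ε : ℝ => ∫ t in {t : ℝ | ε < |t - x|}, (x - t)⁻¹ • φ t) (𝓝[>] 0)
      (𝓝 (cauchyPV φ x)) := by
  have hpos : ∀ᶠ ε : ℝ in 𝓝[>] 0, 0 < ε := self_mem_nhdsWithin
  have h := tendsto_integral_odd_kernel_smul (l := 𝓝[>] 0)
    (Eventually.of_forall measurable_truncInv) (Eventually.of_forall odd_truncInv)
    (hpos.mono fun ε hε => ⟨ε⁻¹, abs_truncInv_le hε⟩)
    (Eventually.of_forall abs_mul_truncInv_le_one)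
    (fun y hy => (tendsto_mul_truncInv hy).mono_left nhdsWithin_le_nhds) hφ hquot
  rw [one_smul] at h
  refine h.congr fun ε => ?_
  rw [← integral_indicator (measurableSet_lt measurable_const (by fun_prop))]
  congr 1 with t
  by_cases ht : ε < |x - t| <;> simp [truncInv, ht, abs_sub_comm t x]

theorem tendsto_smul_integral_Sker_smul (hφ : Integrable φ)
    (hquot : Integrable (symmQuotient φ x)) :
    Tendsto (fun a : ℝ => a • ∫ t, Sker a (x - t) • φ t) atTop (𝓝 (-cauchyPV φ x)) := by
  have hpos := eventually_gt_atTop (0 : ℝ)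
  have h := tendsto_integral_odd_kernel_smul (l := atTop) (K := fun a y => a * Sker a y)
    (hpos.mono fun a ha => (measurable_Sker ha).const_mul a)
    (Eventually.of_forall fun a y => by simp only [odd_Sker a y, mul_neg])
    (hpos.mono fun a ha => ⟨a * (Real.pi / 2), fun y => by
      rw [abs_mul, abs_of_pos ha]
      gcongr
      exact abs_Sker_le ha y⟩)
    (hpos.mono fun a ha => abs_mul_mul_Sker_le_one ha)
    (fun y hy => tendsto_mul_mul_Sker hy) hφ hquot
  simpa only [mul_smul, integral_smul, neg_one_smul] using h

end OddKernel

section Holder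

open scoped NNReal

lemma holderWith_of_dist_le {X Y : Type*} [PseudoMetricSpace X] [PseudoMetricSpace Y] {C r : ℝ≥0}
    {f : X → Y} (h : ∀ x y, dist (f x) (f y) ≤ C * dist x y ^ (r : ℝ)) : HolderWith C r f := by
  intro x y
  rw [edist_nndist, edist_nndist, ← ENNReal.coe_rpow_of_nonneg _ r.coe_nonneg, ← ENNReal.coe_mul,
    ENNReal.coe_le_coe]
  exact h x y

variable {E : Type*} [NormedAddCommGroup E] [NormedSpace ℝ E] {φ : ℝ → E} {C r : ℝ≥0}

lemma norm_symmQuotient_le (hφ : HolderWith C r φ) (x : ℝ) {y : ℝ} (hy : y ≠ 0) :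
    ‖symmQuotient φ x y‖ ≤ C * 2 ^ (r : ℝ) * ‖y‖ ^ (-(1 - r : ℝ)) := by
  have hpos : 0 < ‖y‖ := norm_pos_iff.2 hy
  have hdist : dist (x - y) (x + y) = 2 * ‖y‖ := by
    rw [Real.dist_eq, show x - y - (x + y) = -(2 * y) by ring, abs_neg, abs_mul, abs_two,
      Real.norm_eq_abs]
  calc ‖symmQuotient φ x y‖ = ‖y‖⁻¹ * dist (φ (x - y)) (φ (x + y)) := by
        rw [symmQuotient, norm_smul, norm_inv, dist_eq_norm]
    _ ≤ ‖y‖⁻¹ * (C * (2 * ‖y‖) ^ (r : ℝ)) := by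
        gcongr
        exact hdist ▸ hφ.dist_le _ _
    _ = C * 2 ^ (r : ℝ) * ‖y‖ ^ (-(1 - r : ℝ)) := by
        rw [neg_sub, Real.rpow_sub_one hpos.ne', Real.mul_rpow zero_le_two hpos.le]
        ring

lemma integrable_symmQuotient (hφ : HolderWith C r φ) (hr : 0 < r) (hsupp : HasCompactSupport φ)
    (x : ℝ) : Integrable (symmQuotient φ x) := by
  have hcont : Continuous φ := hφ.continuous hr
  have hloc : LocallyIntegrable (symmQuotient φ x) := by
    refine locallyIntegrable_of_norm_le_rpow (by simp) (C := C * 2 ^ (r : ℝ)) (α := 1 - r)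
      (by simpa using hr) ?_ (measurable_inv.aestronglyMeasurable.smul
        (Continuous.aestronglyMeasurable (by fun_prop)))
    filter_upwards [Measure.ae_ne volume 0] with y hy
    exact norm_symmQuotient_le hφ x hy
  have hcompact : HasCompactSupport (symmQuotient φ x) :=
    ((hsupp.comp_homeomorph (Homeomorph.subLeft x)).sub
      (hsupp.comp_homeomorph (Homeomorph.addLeft x))).smul_left
  exact (integrableOn_iff_integrable_of_support_subset (subset_tsupport _)).1
    (hloc.integrableOn_isCompact hcompact)

end Holder

theorem stmt0_general {E : Type*} [NormedAddCommGroup E] [NormedSpace ℝ E] {φ : ℝ → E}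
    (hφ : Integrable φ) {x : ℝ} (hquot : Integrable (symmQuotient φ x)) :
    ∃ L : E,
      Tendsto (fun ε : ℝ => ∫ t in {t : ℝ | ε < |t - x|}, (x - t)⁻¹ • φ t) (𝓝[>] 0) (𝓝 L) ∧
      Tendsto (fun a : ℝ => (a / Real.pi) • ∫ t, Sker a (x - t) • φ t) atTop
        (𝓝 (-(1 / Real.pi) • L)) := by
  refine ⟨cauchyPV φ x, tendsto_setIntegral_inv_smul_cauchyPV hφ hquot, ?_⟩
  have h := (tendsto_smul_integral_Sker_smul hφ hquot).const_smul (1 / Real.pi)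
  simpa only [smul_smul, one_div_mul_eq_div, smul_neg, neg_smul] using h

/-- As `a → ∞`, the operator `(a/π)·(S_a ∗ ·)` applied to a compactly
supported Hölder function tends pointwise to minus the Cauchy principal value. -/
theorem stmt0 (lam : ℝ) (hlam0 : 0 < lam) (hlam1 : lam < 1)
    (phi : ℝ → ℝ) (hsupp : HasCompactSupport phi) (M : ℝ) (hM : 0 < M)
    (hHolder : ∀ x y : ℝ, |phi x - phi y| ≤ M * |x - y| ^ lam) (x : ℝ) :
    ∃ L : ℝ,
      Tendsto (fun ε : ℝ => ∫ t in {t : ℝ | ε < |t - x|}, phi t / (x - t))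
        (nhdsWithin 0 (Set.Ioi 0)) (nhds L) ∧
      Tendsto (fun a : ℝ => (a / Real.pi) * ∫ t : ℝ, Sker a (x - t) * phi t)
        atTop (nhds (-(1 / Real.pi) * L)) := by
  have hphi : HolderWith ⟨M, hM.le⟩ ⟨lam, hlam0.le⟩ phi := holderWith_of_dist_le hHolder
  simpa only [smul_eq_mul, ← div_eq_inv_mul] using stmt0_general
    ((hphi.continuous hlam0).integrable_of_hasCompactSupport hsupp)
    (integrable_symmQuotient hphi hlam0 hsupp x)
end

section
/- Let 0 < λ < 1 and let φ : ℝ → ℝ be compactly supported and Hölder continuous with exponent λ (there is M > 0 with |φ(x) − φ(y)| ≤ M·|x − y|^λ for all x, y). Then for every x ∈ ℝ, the limit as a → +∞ of −(a/π)·∫_{−∞}^{∞} T_a(x − t)·φ(t) dt exists and equals φ(x). (In other words, as a → ∞ the kernel of −(a/π)·(T_a ∗ ·) reduces to the Dirac delta.) -/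
open Filter MeasureTheory Topology

/-!
For `y > 0` the Laplace moments `Mₙ(y) = ∫_0^∞ uⁿ e^{-yu} / (1 + u²) du` satisfy `Mₙ' = -Mₙ₊₁` and
`Mₙ + Mₙ₊₂ = n! / yⁿ⁺¹`. Hence `M₀(y) sin (y - θ) - M₁(y) cos (y - θ)` is the antiderivative of
`cos (y - θ) / y` vanishing at infinity. Phases `θ = 0` and `θ = π/2` evaluate `ci` and `si`, and
their combination in `T_a` collapses to `T_a(x) = -M₁(a|x|)`. The kernel `-(a/π) T_a` is thus the
dilation by `a` of the nonnegative function `π⁻¹ M₁(|x|)`, which is `O(x⁻²)` at infinity and has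
total mass `(2/π) ∫_0^∞ M₁ = (2/π) M₀(0) = 1`, so it is an approximate identity.
-/

lemma continuous_of_dist_le_mul_rpow {X Y : Type*} [PseudoMetricSpace X] [PseudoMetricSpace Y]
    {f : X → Y} {C r : ℝ} (hr : 0 < r) (hf : ∀ x y, dist (f x) (f y) ≤ C * dist x y ^ r) :
    Continuous f := by
  refine continuous_iff_continuousAt.2 fun y => tendsto_iff_dist_tendsto_zero.2 ?_
  have hbound : ContinuousAt (fun x => C * dist x y ^ r) y := by
    fun_prop (disch := simp [hr.le])
  refine squeeze_zero (fun _ => dist_nonneg) (fun x => hf x y) ?_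
  simpa [ContinuousAt, hr.ne'] using hbound

lemma tendsto_intervalIntegral_atTop_of_hasDerivAt_s1 {E : Type*} [NormedAddCommGroup E]
    [NormedSpace ℝ E] [CompleteSpace E] {f f' : ℝ → E} {a : ℝ} {m : E}
    (hderiv : ∀ t ∈ Set.Ici a, HasDerivAt f (f' t) t) (hf' : ContinuousOn f' (Set.Ici a))
    (hlim : Tendsto f atTop (𝓝 m)) :
    Tendsto (fun R => ∫ t in a..R, f' t) atTop (𝓝 (m - f a)) := by
  refine (hlim.sub_const (f a)).congr' ?_
  filter_upwards [eventually_ge_atTop a] with R hR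
  have hsub : Set.uIcc a R ⊆ Set.Ici a := Set.uIcc_of_le hR ▸ Set.Icc_subset_Ici_self
  exact (intervalIntegral.integral_eq_sub_of_hasDerivAt (fun t ht => hderiv t (hsub ht))
    (hf'.mono hsub).intervalIntegrable).symm

lemma integral_pow_mul_exp_neg_mul_Ioi (n : ℕ) {y : ℝ} (hy : 0 < y) :
    ∫ u in Set.Ioi (0 : ℝ), u ^ n * Real.exp (-y * u) = n.factorial / y ^ (n + 1) := by
  have h := Real.integral_rpow_mul_exp_neg_mul_Ioi (a := n + 1) (by positivity) hy
  simp only [add_sub_cancel_right, Real.Gamma_nat_eq_factorial, Real.rpow_natCast] at h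
  norm_cast at h
  simpa [div_eq_inv_mul] using h

section LaplaceMoment

open ProbabilityTheory

variable {μ : Measure ℝ}

/-- The `n`-th Laplace moment `∫ uⁿ e^{-yu} dμ(u)` of a measure `μ` on the real line: up to the
sign `(-1)ⁿ`, the `n`-th derivative of the Laplace transform of `μ`. -/
noncomputable def laplaceMoment (μ : Measure ℝ) (n : ℕ) (y : ℝ) : ℝ :=
  ∫ u, u ^ n * Real.exp (-y * u) ∂μ

lemma laplaceMoment_nonneg (hμ : ∀ᵐ u ∂μ, 0 ≤ u) (n : ℕ) (y : ℝ) : 0 ≤ laplaceMoment μ n y := by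
  refine integral_nonneg_of_ae ?_
  filter_upwards [hμ] with u hu
  positivity

lemma laplaceMoment_zero_zero : laplaceMoment μ 0 0 = μ.real Set.univ := by
  simp [laplaceMoment]

variable [IsFiniteMeasure μ]

lemma neg_mem_interior_integrableExpSet (hμ : ∀ᵐ u ∂μ, 0 ≤ u) {y : ℝ} (hy : 0 < y) :
    -y ∈ interior (integrableExpSet id μ) := by
  refine interior_maximal (fun t (ht : t < 0) => ?_) isOpen_Iio (neg_lt_zero.2 hy)
  refine .of_bound (by fun_prop) 1 ?_
  filter_upwards [hμ] with u hu
  simpa using mul_nonpos_of_nonpos_of_nonneg ht.le hu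

lemma integrable_pow_mul_exp_neg_mul (hμ : ∀ᵐ u ∂μ, 0 ≤ u) (n : ℕ) {y : ℝ} (hy : 0 < y) :
    Integrable (fun u => u ^ n * Real.exp (-y * u)) μ :=
  integrable_pow_mul_exp_of_mem_interior_integrableExpSet
    (neg_mem_interior_integrableExpSet hμ hy) n

lemma hasDerivAt_laplaceMoment (hμ : ∀ᵐ u ∂μ, 0 ≤ u) (n : ℕ) {y : ℝ} (hy : 0 < y) :
    HasDerivAt (laplaceMoment μ n) (-laplaceMoment μ (n + 1) y) y := by
  exact ((hasDerivAt_integral_pow_mul_exp_real (neg_mem_interior_integrableExpSet hμ hy) n).comp y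
    (hasDerivAt_neg y)).congr_deriv (mul_neg_one _)

lemma continuousWithinAt_laplaceMoment_zero (hμ : ∀ᵐ u ∂μ, 0 ≤ u) :
    ContinuousWithinAt (laplaceMoment μ 0) (Set.Ici 0) 0 := by
  refine continuousWithinAt_of_dominated (bound := 1) (.of_forall fun y => by fun_prop) ?_
    (integrable_const 1) (.of_forall fun u => by fun_prop)
  filter_upwards [self_mem_nhdsWithin] with y (hy : 0 ≤ y)
  filter_upwards [hμ] with u hu
  simpa using mul_nonneg hy hu

lemma integral_Ioi_laplaceMoment_one (hμ : ∀ᵐ u ∂μ, 0 ≤ u)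
    (hlim : Tendsto (laplaceMoment μ 0) atTop (𝓝 0)) :
    ∫ y in Set.Ioi (0 : ℝ), laplaceMoment μ 1 y = μ.real Set.univ := by
  have h := integral_Ioi_of_hasDerivAt_of_nonpos (continuousWithinAt_laplaceMoment_zero hμ)
    (fun y hy => hasDerivAt_laplaceMoment hμ 0 hy)
    (fun y _ => neg_nonpos.2 (laplaceMoment_nonneg hμ 1 y)) hlim
  rwa [integral_neg, zero_sub, neg_inj, laplaceMoment_zero_zero] at h

end LaplaceMoment

section HalfCauchy

/-- The measure `du / (1 + u²)` on `(0, ∞)`, the half-Cauchy distribution without its normalising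
factor `2 / π`. Its Laplace moments of order `0` and `1` are the auxiliary functions of the sine and
cosine integrals. -/
noncomputable def halfCauchyMeasure : Measure ℝ :=
  (volume.restrict (Set.Ioi 0)).withDensity fun u => ENNReal.ofReal (1 + u ^ 2)⁻¹

instance isFiniteMeasure_halfCauchyMeasure : IsFiniteMeasure halfCauchyMeasure :=
  isFiniteMeasure_withDensity_ofReal integrable_inv_one_add_sq.integrableOn.2

lemma ae_halfCauchyMeasure_nonneg : ∀ᵐ u ∂halfCauchyMeasure, 0 ≤ u :=
  (withDensity_absolutelyContinuous _ _).ae_le <|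
    (ae_restrict_mem measurableSet_Ioi).mono fun _ hu => le_of_lt hu

lemma integral_halfCauchyMeasure {E : Type*} [NormedAddCommGroup E] [NormedSpace ℝ E] (g : ℝ → E) :
    ∫ u, g u ∂halfCauchyMeasure = ∫ u in Set.Ioi (0 : ℝ), (1 + u ^ 2)⁻¹ • g u := by
  rw [halfCauchyMeasure, integral_withDensity_eq_integral_toReal_smul (by fun_prop) (by simp)]
  refine integral_congr_ae (.of_forall fun u => ?_)
  simp only [ENNReal.toReal_ofReal (by positivity : (0 : ℝ) ≤ (1 + u ^ 2)⁻¹)]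

lemma halfCauchyMeasure_real_univ : halfCauchyMeasure.real Set.univ = Real.pi / 2 := by
  have h := integral_halfCauchyMeasure fun _ => (1 : ℝ)
  simpa [integral_Ioi_inv_one_add_sq] using h

lemma laplaceMoment_halfCauchyMeasure_add (n : ℕ) {y : ℝ} (hy : 0 < y) :
    laplaceMoment halfCauchyMeasure n y + laplaceMoment halfCauchyMeasure (n + 2) y
      = n.factorial / y ^ (n + 1) := by
  have hint (k : ℕ) := integrable_pow_mul_exp_neg_mul ae_halfCauchyMeasure_nonneg k hy
  rw [laplaceMoment, laplaceMoment, ← integral_add (hint n) (hint (n + 2)),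
    integral_halfCauchyMeasure, ← integral_pow_mul_exp_neg_mul_Ioi n hy]
  congr 1 with u
  rw [smul_eq_mul]
  field_simp
  ring

lemma laplaceMoment_halfCauchyMeasure_le (n : ℕ) {y : ℝ} (hy : 0 < y) :
    laplaceMoment halfCauchyMeasure n y ≤ n.factorial / y ^ (n + 1) := by
  rw [← laplaceMoment_halfCauchyMeasure_add n hy]
  exact le_add_of_nonneg_right (laplaceMoment_nonneg ae_halfCauchyMeasure_nonneg _ y)

lemma tendsto_pow_mul_laplaceMoment_halfCauchyMeasure (n : ℕ) :
    Tendsto (fun y => y ^ n * laplaceMoment halfCauchyMeasure n y) atTop (𝓝 0) := by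
  have hbound : Tendsto (fun y : ℝ => n.factorial * y⁻¹) atTop (𝓝 0) := by
    simpa using tendsto_inv_atTop_zero.const_mul (n.factorial : ℝ)
  refine squeeze_zero' ?_ ?_ hbound
  · filter_upwards [eventually_ge_atTop 0] with y hy
    exact mul_nonneg (pow_nonneg hy n) (laplaceMoment_nonneg ae_halfCauchyMeasure_nonneg n y)
  · filter_upwards [eventually_gt_atTop 0] with y hy
    calc y ^ n * laplaceMoment halfCauchyMeasure n y
        ≤ y ^ n * (n.factorial / y ^ (n + 1)) := by
          gcongr
          exact laplaceMoment_halfCauchyMeasure_le n hy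
      _ = n.factorial * y⁻¹ := by
          rw [pow_succ]
          field_simp

lemma tendsto_laplaceMoment_halfCauchyMeasure (n : ℕ) :
    Tendsto (laplaceMoment halfCauchyMeasure n) atTop (𝓝 0) := by
  refine squeeze_zero' (.of_forall (laplaceMoment_nonneg ae_halfCauchyMeasure_nonneg n)) ?_
    (tendsto_pow_mul_laplaceMoment_halfCauchyMeasure n)
  filter_upwards [eventually_ge_atTop 1] with y hy
  exact le_mul_of_one_le_left (laplaceMoment_nonneg ae_halfCauchyMeasure_nonneg n y)
    (one_le_pow₀ hy)

lemma hasDerivAt_laplaceMoment_halfCauchyMeasure_one {y : ℝ} (hy : 0 < y) :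
    HasDerivAt (laplaceMoment halfCauchyMeasure 1)
      (laplaceMoment halfCauchyMeasure 0 y - y⁻¹) y := by
  have hrec := laplaceMoment_halfCauchyMeasure_add 0 hy
  simp only [Nat.factorial_zero, Nat.cast_one, zero_add, pow_one, one_div] at hrec
  exact (hasDerivAt_laplaceMoment ae_halfCauchyMeasure_nonneg 1 hy).congr_deriv (by linarith)

lemma integral_Ioi_laplaceMoment_halfCauchyMeasure_one :
    ∫ y in Set.Ioi (0 : ℝ), laplaceMoment halfCauchyMeasure 1 y = Real.pi / 2 := by
  rw [integral_Ioi_laplaceMoment_one ae_halfCauchyMeasure_nonneg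
    (tendsto_laplaceMoment_halfCauchyMeasure 0), halfCauchyMeasure_real_univ]

end HalfCauchy

section SineCosineIntegral

lemma tendsto_integral_cos_sub_div (θ : ℝ) {y : ℝ} (hy : 0 < y) :
    Tendsto (fun R => ∫ t in y..R, Real.cos (t - θ) / t) atTop
      (𝓝 (laplaceMoment halfCauchyMeasure 1 y * Real.cos (y - θ)
        - laplaceMoment halfCauchyMeasure 0 y * Real.sin (y - θ))) := by
  have hderiv (t : ℝ) (ht : 0 < t) : HasDerivAt
      (fun t => laplaceMoment halfCauchyMeasure 0 t * Real.sin (t - θ)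
        - laplaceMoment halfCauchyMeasure 1 t * Real.cos (t - θ)) (Real.cos (t - θ) / t) t := by
    have hshift := (hasDerivAt_id' t).sub_const θ
    exact (((hasDerivAt_laplaceMoment ae_halfCauchyMeasure_nonneg 0 ht).mul hshift.sin).sub
      ((hasDerivAt_laplaceMoment_halfCauchyMeasure_one ht).mul hshift.cos)).congr_deriv (by ring)
  have hlim : Tendsto (fun t => laplaceMoment halfCauchyMeasure 0 t * Real.sin (t - θ)
      - laplaceMoment halfCauchyMeasure 1 t * Real.cos (t - θ)) atTop (𝓝 0) := by
    have hsin := (tendsto_laplaceMoment_halfCauchyMeasure 0).zero_mul_isBoundedUnder_le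
      (isBoundedUnder_of ⟨1, fun t => Real.abs_sin_le_one (t - θ)⟩)
    have hcos := (tendsto_laplaceMoment_halfCauchyMeasure 1).zero_mul_isBoundedUnder_le
      (isBoundedUnder_of ⟨1, fun t => Real.abs_cos_le_one (t - θ)⟩)
    simpa using hsin.sub hcos
  have hcont : ContinuousOn (fun t => Real.cos (t - θ) / t) (Set.Ici y) :=
    ContinuousOn.div (by fun_prop) continuousOn_id fun t ht => (hy.trans_le ht).ne'
  simpa using tendsto_intervalIntegral_atTop_of_hasDerivAt_s1
    (fun t ht => hderiv t (hy.trans_le ht)) hcont hlim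

lemma ci_eq_laplaceMoment {y : ℝ} (hy : 0 < y) :
    ci y = laplaceMoment halfCauchyMeasure 0 y * Real.sin y
      - laplaceMoment halfCauchyMeasure 1 y * Real.cos y := by
  have h := tendsto_integral_cos_sub_div 0 hy
  simp only [sub_zero] at h
  rw [ci, h.limUnder_eq, neg_sub]

lemma si_eq_laplaceMoment {y : ℝ} (hy : 0 < y) :
    si y = -(laplaceMoment halfCauchyMeasure 0 y * Real.cos y
      + laplaceMoment halfCauchyMeasure 1 y * Real.sin y) := by
  have h := tendsto_integral_cos_sub_div (Real.pi / 2) hy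
  simp only [Real.cos_sub_pi_div_two, Real.sin_sub_pi_div_two] at h
  rw [si, h.limUnder_eq]
  ring

lemma Tker_eq_neg_laplaceMoment {a x : ℝ} (ha : 0 < a) (hx : x ≠ 0) :
    Tker a x = -laplaceMoment halfCauchyMeasure 1 (a * |x|) := by
  have hy : 0 < a * |x| := by positivity
  rw [Tker, si_eq_laplaceMoment hy, ci_eq_laplaceMoment hy]
  linear_combination
    (-laplaceMoment halfCauchyMeasure 1 (a * |x|)) * Real.sin_sq_add_cos_sq (a * |x|)

end SineCosineIntegral

section ApproximateIdentity

/-- The profile `π⁻¹ ∫_0^∞ u e^{-|x|u} / (1 + u²) du` whose dilations `a K(a x)` are the kernels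
`-(a/π) T_a(x)`. -/
noncomputable def deltaProfile (x : ℝ) : ℝ :=
  Real.pi⁻¹ * laplaceMoment halfCauchyMeasure 1 |x|

lemma deltaProfile_nonneg (x : ℝ) : 0 ≤ deltaProfile x :=
  mul_nonneg (inv_nonneg.2 Real.pi_pos.le) (laplaceMoment_nonneg ae_halfCauchyMeasure_nonneg 1 |x|)

lemma integral_deltaProfile : ∫ x, deltaProfile x = 1 := by
  simp only [deltaProfile]
  rw [integral_const_mul, integral_comp_abs, integral_Ioi_laplaceMoment_halfCauchyMeasure_one]
  field_simp

lemma tendsto_norm_mul_deltaProfile_cobounded :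
    Tendsto (fun x => ‖x‖ * deltaProfile x) (Bornology.cobounded ℝ) (𝓝 0) := by
  have h := ((tendsto_pow_mul_laplaceMoment_halfCauchyMeasure 1).const_mul Real.pi⁻¹).comp
    (tendsto_norm_cobounded_atTop (E := ℝ))
  simpa [Function.comp_def, deltaProfile, mul_left_comm] using h

lemma neg_div_pi_mul_Tker {a x : ℝ} (ha : 0 < a) (hx : x ≠ 0) :
    -(a / Real.pi) * Tker a x = a * deltaProfile (a * x) := by
  rw [Tker_eq_neg_laplaceMoment ha hx, deltaProfile, abs_mul, abs_of_pos ha]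
  ring

end ApproximateIdentity

theorem stmt1_general {E : Type*} [NormedAddCommGroup E] [NormedSpace ℝ E] [CompleteSpace E]
    {phi : ℝ → E} (hphi : Integrable phi) {x : ℝ} (hx : ContinuousAt phi x) :
    Tendsto (fun a : ℝ => -(a / Real.pi) • ∫ t : ℝ, Tker a (x - t) • phi t)
      atTop (𝓝 (phi x)) := by
  refine (tendsto_integral_comp_smul_smul_of_integrable' (μ := volume) deltaProfile_nonneg
    integral_deltaProfile (by simpa using tendsto_norm_mul_deltaProfile_cobounded)
    hphi hx).congr' ?_
  filter_upwards [eventually_gt_atTop 0] with a ha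
  rw [← integral_smul]
  refine integral_congr_ae ?_
  filter_upwards [Measure.ae_ne volume x] with t ht
  rw [smul_smul, neg_div_pi_mul_Tker ha (sub_ne_zero.2 ht.symm), Module.finrank_self, pow_one,
    smul_eq_mul]

/-- As `a → ∞`, the operator `-(a/π)·(T_a ∗ ·)` applied to a compactly
supported Hölder function tends pointwise to the identity (Dirac delta kernel). -/
theorem stmt1 (lam : ℝ) (hlam0 : 0 < lam) (hlam1 : lam < 1)
    (phi : ℝ → ℝ) (hsupp : HasCompactSupport phi) (M : ℝ) (hM : 0 < M)
    (hHolder : ∀ x y : ℝ, |phi x - phi y| ≤ M * |x - y| ^ lam) (x : ℝ) :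
    Tendsto (fun a : ℝ => -(a / Real.pi) * ∫ t : ℝ, Tker a (x - t) * phi t)
      atTop (nhds (phi x)) := by
  have hcont : Continuous phi := continuous_of_dist_le_mul_rpow hlam0 hHolder
  exact stmt1_general (hcont.integrable_of_hasCompactSupport hsupp) hcont.continuousAt
end

section
/- For every λ with 0 < λ < 1, the integral ∫_0^∞ u^λ · |si(u)·sin(u) + ci(u)·cos(u)| du is finite. (Equivalently, with Σ₂(u) := −u·(si(u)·sin u + ci(u)·cos u), the integral ∫_0^∞ |Σ₂(u)|/u^{1−λ} du converges.) -/
open Filter MeasureTheory Topology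

/-! The kernel `-(si u sin u + ci u cos u)` is the improper integral of `cos (t - u) / t` over
`t > u`. Integrating by parts twice, with the antiderivatives `sin (t - u)` and
`1 - cos (t - u)` that vanish at `t = u`, leaves no boundary term and gives the absolutely
convergent integral `2 ∫_u^∞ (1 - cos (t - u)) / t ^ 3 dt`. Since `1 - cos s ≤ 2 s ^ p` for every
`p ∈ [0, 2]`, the kernel is at most `(4 / q) u ^ (-q)` for every `q ∈ (0, 2]`: small `q` controls
it near `0` and `q = 2` controls it at infinity. -/

section

open Asymptotics Real Set

theorem one_sub_cos_le_two_mul_rpow {s p : ℝ} (hs : 0 ≤ s) (hp0 : 0 ≤ p) (hp2 : p ≤ 2) :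
    1 - cos s ≤ 2 * s ^ p := by
  rcases hs.eq_or_lt with rfl | hs0
  · simpa using rpow_nonneg le_rfl p
  rcases le_total s 1 with hs1 | hs1
  · have hsq : s ^ 2 ≤ s ^ p := by
      simpa only [rpow_two] using rpow_le_rpow_of_exponent_ge hs0 hs1 hp2
    linarith [one_sub_sq_div_two_le_cos (x := s), sq_nonneg s]
  · linarith [neg_one_le_cos s, one_le_rpow hs1 hp0]

theorem one_sub_cos_sub_div_cube_le {q u t : ℝ} (hq0 : 0 ≤ q) (hq2 : q ≤ 2) (hu : 0 ≤ u)
    (hut : u < t) : (1 - cos (t - u)) / t ^ 3 ≤ 2 * t ^ (-q - 1) := by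
  have ht : 0 < t := hu.trans_lt hut
  have hs : 0 ≤ t - u := sub_nonneg.2 hut.le
  have hp : 0 ≤ 2 - q := sub_nonneg.2 hq2
  calc (1 - cos (t - u)) / t ^ 3
      ≤ 2 * (t - u) ^ (2 - q) / t ^ 3 := by
        gcongr
        exact one_sub_cos_le_two_mul_rpow hs hp (sub_le_self 2 hq0)
    _ ≤ 2 * t ^ (2 - q) / t ^ 3 := by
        gcongr
        exact sub_le_self t hu
    _ = 2 * t ^ (-q - 1) := by
        rw [mul_div_assoc, ← rpow_natCast, ← rpow_sub ht,
          show 2 - q - (3 : ℕ) = -q - 1 by push_cast; ring]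

theorem abs_one_sub_cos_le_two (s : ℝ) : |1 - cos s| ≤ 2 :=
  abs_le.2 ⟨by linarith [cos_le_one s], by linarith [neg_one_le_cos s]⟩

theorem intervalIntegrable_div_pow {f : ℝ → ℝ} {a b : ℝ} (hf : ContinuousOn f (uIcc a b)) (n : ℕ)
    (ha : 0 < a) (hb : 0 < b) : IntervalIntegrable (fun t ↦ f t / t ^ n) volume a b :=
  (hf.div (continuousOn_pow n) fun _ ht ↦
    (pow_pos ((lt_min ha hb).trans_le ht.1) n).ne').intervalIntegrable

theorem integrableOn_Ioi_div_pow {f : ℝ → ℝ} {x : ℝ}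
    (hf : AEStronglyMeasurable f (volume.restrict (Ioi x))) {B : ℝ} (hB : ∀ t, |f t| ≤ B)
    {n : ℕ} (hn : 1 < n) (hx : 0 < x) :
    IntegrableOn (fun t ↦ f t / t ^ n) (Ioi x) := by
  have hn' : -(n : ℝ) < -1 := neg_lt_neg (mod_cast hn)
  have h_int := (integrableOn_Ioi_rpow_of_lt hn' hx).bdd_mul hf (ae_of_all _ hB)
  refine IntegrableOn.congr_fun h_int (fun t ht ↦ ?_) measurableSet_Ioi
  simp only [rpow_neg (hx.trans ht).le, rpow_natCast, div_eq_mul_inv]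

theorem tendsto_div_pow_atTop_zero {f : ℝ → ℝ} {B : ℝ} (hB : ∀ t, |f t| ≤ B)
    {n : ℕ} (hn : n ≠ 0) : Tendsto (fun t ↦ f t / t ^ n) atTop (𝓝 0) := by
  have hinv : Tendsto (fun t : ℝ ↦ (t ^ n)⁻¹) atTop (𝓝 0) :=
    (tendsto_pow_atTop hn).inv_tendsto_atTop
  simpa only [div_eq_inv_mul] using
    hinv.zero_mul_isBoundedUnder_le (isBoundedUnder_of ⟨B, hB⟩)

section SecondAntiderivative

variable {g G H : ℝ → ℝ}

theorem integral_div_eq_add_integral_div_cube (hg : Continuous g) (hG : ∀ t, HasDerivAt G (g t) t)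
    (hH : ∀ t, HasDerivAt H (G t) t) {x R : ℝ} (hx : 0 < x) (hR : 0 < R) :
    ∫ t in x..R, g t / t =
      G R / R + H R / R ^ 2 - (G x / x + H x / x ^ 2) + 2 * ∫ t in x..R, H t / t ^ 3 := by
  have hHc : Continuous H := continuous_iff_continuousAt.2 fun t ↦ (hH t).continuousAt
  have hg_int : IntervalIntegrable (fun t ↦ g t / t) volume x R := by
    simpa only [pow_one] using intervalIntegrable_div_pow hg.continuousOn 1 hx hR
  have hH_int : IntervalIntegrable (fun t ↦ 2 * (H t / t ^ 3)) volume x R :=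
    (intervalIntegrable_div_pow hHc.continuousOn 3 hx hR).const_mul 2
  have hderiv : ∀ t ∈ uIcc x R,
      HasDerivAt (fun t ↦ G t / t + H t / t ^ 2) (g t / t - 2 * (H t / t ^ 3)) t := by
    intro t ht
    have ht0 : t ≠ 0 := ((lt_min hx hR).trans_le ht.1).ne'
    refine (((hG t).fun_div (hasDerivAt_id t) ht0).fun_add
      ((hH t).fun_div (hasDerivAt_pow 2 t) (pow_ne_zero 2 ht0))).congr_deriv ?_
    simp only [id]
    field_simp
    ring
  have hftc := intervalIntegral.integral_eq_sub_of_hasDerivAt hderiv (hg_int.sub hH_int)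
  rw [intervalIntegral.integral_sub hg_int hH_int, intervalIntegral.integral_const_mul] at hftc
  linarith

theorem tendsto_integral_div_of_hasDerivAt (hg : Continuous g)
    (hG : ∀ t, HasDerivAt G (g t) t) (hH : ∀ t, HasDerivAt H (G t) t) {A B : ℝ}
    (hA : ∀ t, |G t| ≤ A) (hB : ∀ t, |H t| ≤ B) {x : ℝ} (hx : 0 < x) :
    Tendsto (fun R ↦ ∫ t in x..R, g t / t) atTop
      (𝓝 (2 * (∫ t in Ioi x, H t / t ^ 3) - (G x / x + H x / x ^ 2))) := by
  have hHc : Continuous H := continuous_iff_continuousAt.2 fun t ↦ (hH t).continuousAt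
  have hbdry : Tendsto (fun R ↦ G R / R + H R / R ^ 2) atTop (𝓝 0) := by
    simpa using (tendsto_div_pow_atTop_zero hA one_ne_zero).add
      (tendsto_div_pow_atTop_zero hB two_ne_zero)
  have htail := (intervalIntegral_tendsto_integral_Ioi x
    (integrableOn_Ioi_div_pow hHc.aestronglyMeasurable hB (n := 3) (by norm_num) hx)
    tendsto_id).const_mul 2
  have hsum := (hbdry.sub_const (G x / x + H x / x ^ 2)).add htail
  rw [zero_sub, neg_add_eq_sub] at hsum
  refine hsum.congr' ?_
  filter_upwards [eventually_gt_atTop 0] with R hR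
  exact (integral_div_eq_add_integral_div_cube hg hG hH hx hR).symm

end SecondAntiderivative

theorem tendsto_integral_sin_div {x : ℝ} (hx : 0 < x) :
    Tendsto (fun R ↦ ∫ t in x..R, sin t / t) atTop (𝓝 (-si x)) := by
  have hlim := tendsto_integral_div_of_hasDerivAt continuous_sin
    (fun t ↦ by simpa using (hasDerivAt_cos t).fun_neg) (fun t ↦ (hasDerivAt_sin t).fun_neg)
    (fun t ↦ (abs_neg _).trans_le (abs_cos_le_one t))
    (fun t ↦ (abs_neg _).trans_le (abs_sin_le_one t)) hx
  simpa only [si, neg_neg] using tendsto_nhds_limUnder ⟨_, hlim⟩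

theorem tendsto_integral_cos_div {x : ℝ} (hx : 0 < x) :
    Tendsto (fun R ↦ ∫ t in x..R, cos t / t) atTop (𝓝 (-ci x)) := by
  have hlim := tendsto_integral_div_of_hasDerivAt continuous_cos
    hasDerivAt_sin (fun t ↦ by simpa using (hasDerivAt_cos t).fun_neg) abs_sin_le_one
    (fun t ↦ (abs_neg _).trans_le (abs_cos_le_one t)) hx
  simpa only [ci, neg_neg] using tendsto_nhds_limUnder ⟨_, hlim⟩

/-- The auxiliary function `g(u) = -(ci u cos u + si u sin u)` of the sine and cosine integrals.
The sign is the classical one, which makes `g` nonnegative on `(0, ∞)`. -/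
noncomputable def siciAux (u : ℝ) : ℝ :=
  -(si u * sin u + ci u * cos u)

namespace siciAux

variable {u : ℝ}

theorem tendsto_integral_cos_sub_div (hu : 0 < u) :
    Tendsto (fun R ↦ ∫ t in u..R, cos (t - u) / t) atTop (𝓝 (siciAux u)) := by
  have hlim := ((tendsto_integral_sin_div hu).mul_const (sin u)).add
    ((tendsto_integral_cos_div hu).mul_const (cos u))
  rw [show -si u * sin u + -ci u * cos u = siciAux u by rw [siciAux]; ring] at hlim
  refine hlim.congr' ?_
  filter_upwards [eventually_gt_atTop 0] with R hR
  have h_int {f : ℝ → ℝ} (hf : Continuous f) :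
      IntervalIntegrable (fun t ↦ f t / t) volume u R := by
    simpa only [pow_one] using intervalIntegrable_div_pow hf.continuousOn 1 hu hR
  rw [← intervalIntegral.integral_mul_const, ← intervalIntegral.integral_mul_const,
    ← intervalIntegral.integral_add ((h_int continuous_sin).mul_const _)
      ((h_int continuous_cos).mul_const _)]
  refine intervalIntegral.integral_congr fun t _ ↦ ?_
  simp only [cos_sub]
  ring

theorem eq_two_mul_integral (hu : 0 < u) :
    siciAux u = 2 * ∫ t in Ioi u, (1 - cos (t - u)) / t ^ 3 := by
  have hsin (t : ℝ) : HasDerivAt (fun t ↦ sin (t - u)) (cos (t - u)) t :=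
    (hasDerivAt_sin (t - u)).comp_sub_const t u
  have hcos (t : ℝ) : HasDerivAt (fun t ↦ 1 - cos (t - u)) (sin (t - u)) t := by
    simpa using ((hasDerivAt_cos (t - u)).comp_sub_const t u).const_sub 1
  have hlim := tendsto_integral_div_of_hasDerivAt (by fun_prop) hsin hcos
    (fun t ↦ abs_sin_le_one (t - u)) (fun t ↦ abs_one_sub_cos_le_two (t - u)) hu
  simpa using tendsto_nhds_unique (tendsto_integral_cos_sub_div hu) hlim

theorem nonneg (hu : 0 < u) : 0 ≤ siciAux u := by
  rw [eq_two_mul_integral hu]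
  refine mul_nonneg zero_le_two (setIntegral_nonneg measurableSet_Ioi fun t ht ↦ ?_)
  exact div_nonneg (sub_nonneg.2 (cos_le_one _)) (pow_pos (hu.trans ht) 3).le

theorem le_mul_rpow_neg {q : ℝ} (hq0 : 0 < q) (hq2 : q ≤ 2) (hu : 0 < u) :
    siciAux u ≤ 4 / q * u ^ (-q) := by
  have hexp : -q - 1 < -1 := by linarith
  calc siciAux u = 2 * ∫ t in Ioi u, (1 - cos (t - u)) / t ^ 3 := eq_two_mul_integral hu
    _ ≤ 2 * ∫ t in Ioi u, 2 * t ^ (-q - 1) := by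
        gcongr ?_ * ?_
        exact setIntegral_mono_on
          (integrableOn_Ioi_div_pow (by fun_prop) (fun t ↦ abs_one_sub_cos_le_two (t - u))
            (by norm_num) hu)
          ((integrableOn_Ioi_rpow_of_lt hexp hu).const_mul 2) measurableSet_Ioi
          fun t ht ↦ one_sub_cos_sub_div_cube_le hq0.le hq2 hu.le ht
    _ = 4 / q * u ^ (-q) := by
        rw [integral_const_mul, integral_Ioi_rpow_of_lt hexp hu, sub_add_cancel]
        field_simp
        norm_num

theorem aestronglyMeasurable : AEStronglyMeasurable siciAux (volume.restrict (Ioi 0)) := by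
  let K (p : ℝ × ℝ) : ℝ := (1 - cos (p.2 - p.1)) / p.2 ^ 3
  have hmeas : Measurable ({p : ℝ × ℝ | p.1 < p.2}.indicator K) :=
    Measurable.indicator (by fun_prop) (measurableSet_lt measurable_fst measurable_snd)
  have h_int := hmeas.stronglyMeasurable.integral_prod_right' (ν := volume)
  refine (h_int.const_mul 2).aestronglyMeasurable.congr ?_
  filter_upwards [ae_restrict_mem measurableSet_Ioi] with u hu
  rw [eq_two_mul_integral hu, ← integral_indicator measurableSet_Ioi]
  rfl

theorem locallyIntegrableOn : LocallyIntegrableOn siciAux (Ioi 0) := by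
  refine (locallyIntegrableOn_iff isOpen_Ioi.isLocallyClosed).2 fun k hk hkc ↦ ?_
  have hpow : ContinuousOn (fun u : ℝ ↦ 4 / 2 * u ^ (-2 : ℝ)) k :=
    (continuousOn_id.rpow_const fun u hu ↦ Or.inl (ne_of_gt (hk hu))).const_mul _
  refine (hpow.integrableOn_compact hkc).mono' (aestronglyMeasurable.mono_set hk) ?_
  filter_upwards [ae_restrict_mem hkc.measurableSet] with u hu
  exact (norm_of_nonneg (nonneg (hk hu))).trans_le (le_mul_rpow_neg two_pos le_rfl (hk hu))

theorem isBigO_rpow_neg {q : ℝ} (hq0 : 0 < q) (hq2 : q ≤ 2) {l : Filter ℝ} (hl : ∀ᶠ u in l, 0 < u) :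
    siciAux =O[l] (· ^ (-q)) := by
  refine IsBigO.of_bound (4 / q) ?_
  filter_upwards [hl] with u hu
  rw [norm_of_nonneg (nonneg hu), norm_of_nonneg (rpow_nonneg hu.le _)]
  exact le_mul_rpow_neg hq0 hq2 hu

end siciAux

end

theorem stmt14_general (lam : ℝ) (hlam0 : -1 < lam) (hlam1 : lam < 1) :
    IntegrableOn (fun u : ℝ => u ^ lam * |si u * Real.sin u + ci u * Real.cos u|)
      (Set.Ioi 0) := by
  have h_int := mellin_convergent_of_isBigO_scalar siciAux.locallyIntegrableOn
    (siciAux.isBigO_rpow_neg two_pos le_rfl (eventually_gt_atTop 0))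
    (show lam + 1 < 2 by linarith)
    (siciAux.isBigO_rpow_neg (q := (lam + 1) / 2) (by linarith) (by linarith)
      eventually_mem_nhdsWithin)
    (by linarith)
  refine h_int.congr_fun (fun u hu ↦ ?_) measurableSet_Ioi
  simp only [add_sub_cancel_right]
  rw [← abs_neg, ← siciAux, abs_of_nonneg (siciAux.nonneg hu)]

/-- for `0 < λ < 1`, `∫_0^∞ u^λ |si(u) sin u + ci(u) cos u| du < ∞`. -/
theorem stmt14 (lam : ℝ) (hlam0 : 0 < lam) (hlam1 : lam < 1) :
    IntegrableOn (fun u : ℝ => u ^ lam * |si u * Real.sin u + ci u * Real.cos u|)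
      (Set.Ioi 0) :=
  stmt14_general lam (by linarith) hlam1
end

section
/- Let a > 0 and let f : ℝ → ℝ be a Schwartz function with Fourier transform f̃(ξ) = ∫_{−∞}^{∞} f(x)·e^{iξx} dx. Then for every x ∈ ℝ, (1/2π)·∫_{−∞}^{∞} [a/(|ξ| + a)]·f̃(ξ)·e^{−iξx} dξ = −(a/π)·∫_{−∞}^{∞} T_a(x − t)·f(t) dt. -/
open Filter MeasureTheory Topology

/-!
Both sides are Laplace transforms in `s` of the action of the Poisson semigroup on `f`. Indeed
`1 / (|ξ| + a) = ∫₀^∞ e^(-as) e^(-s|ξ|) ds`, and the multiplier `e^(-s|ξ|)` is convolution with the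
Poisson kernel `(1 / 2π) 2s / (s² + y²)`, while
`∫₀^∞ e^(-as) 2s / (s² + y²) ds = -2 T_a(y)` for `y ≠ 0`. The last identity comes from writing `si`
and `ci` as the parts of the exponential integral `E₁(iu) = e^(-iu) ∫₀^∞ e^(-us) / (s + i) ds`: the
trigonometric factors in `T_a` cancel the oscillation `e^(-iu)`.
-/

open Set

lemma integral_integral_smul_swap_of_nonneg {α β E : Type*} [MeasurableSpace α]
    [MeasurableSpace β] [NormedAddCommGroup E] [NormedSpace ℝ E] [CompleteSpace E]
    {μ : Measure α} {ν : Measure β} [SFinite μ] [SFinite ν]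
    {k : α → β → ℝ} {φ : α → E} (hk_meas : AEStronglyMeasurable (Function.uncurry k) (μ.prod ν))
    (hk_nonneg : ∀ᵐ x ∂μ, 0 ≤ᵐ[ν] k x) (hk : ∀ᵐ x ∂μ, Integrable (k x) ν)
    (hφ : AEStronglyMeasurable φ μ) (hint : Integrable (fun x => (∫ y, k x y ∂ν) • φ x) μ) :
    ∫ x, (∫ y, k x y ∂ν) • φ x ∂μ = ∫ y, ∫ x, k x y • φ x ∂μ ∂ν := by
  have integrable_prod : Integrable (Function.uncurry fun x y => k x y • φ x) (μ.prod ν) := by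
    refine (integrable_prod_iff (hk_meas.smul hφ.comp_fst)).2 ⟨?_, hint.norm.congr ?_⟩
    · filter_upwards [hk] with x hx using hx.smul_const (φ x)
    · filter_upwards [hk_nonneg] with x hx
      simp only [Pi.smul_apply', Function.uncurry_apply_pair, norm_smul]
      rw [integral_mul_const, Real.norm_of_nonneg (integral_nonneg_of_ae hx)]
      congr 1
      refine integral_congr_ae ?_
      filter_upwards [hx] with y hy using (Real.norm_of_nonneg hy).symm
  rw [← integral_integral_swap integrable_prod]
  simp_rw [integral_smul_const]

lemma integral_exp_neg_mul_Ioi_zero {u : ℝ} (hu : 0 < u) :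
    ∫ s in Ioi (0 : ℝ), Real.exp (-u * s) = u⁻¹ := by
  simpa [neg_div_neg_eq] using integral_exp_mul_Ioi (neg_lt_zero.2 hu) 0

section ExponentialIntegral

/-- The exponential integral along the imaginary axis with its oscillation removed,
`e ^ (iu) * E₁(iu) = ∫₀^∞ e ^ (-us) / (s + i) ds` for `u > 0`: it carries `si` and `ci` at once. -/
noncomputable def scaledExpIntegral (u : ℝ) : ℂ :=
  ∫ s in Ioi (0 : ℝ), Complex.exp (-u * s) / (s + Complex.I)

lemma ofReal_add_I_ne_zero (s : ℝ) : (s : ℂ) + Complex.I ≠ 0 :=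
  fun h => by simpa using congrArg Complex.im h

lemma norm_exp_neg_mul_div_add_I_le (u s : ℝ) :
    ‖Complex.exp (-u * s) / (s + Complex.I)‖ ≤ Real.exp (-u * s) := by
  have one_le_norm : 1 ≤ ‖(s : ℂ) + Complex.I‖ := by
    simpa using Complex.abs_im_le_norm ((s : ℂ) + Complex.I)
  rw [norm_div, Complex.norm_exp]
  simpa using div_le_self (Real.exp_pos _).le one_le_norm

lemma integrableOn_exp_neg_mul_div_add_I {u : ℝ} (hu : 0 < u) :
    IntegrableOn (fun s : ℝ => Complex.exp (-u * s) / (s + Complex.I)) (Ioi 0) :=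
  (exp_neg_integrableOn_Ioi 0 hu).mono' (by fun_prop : Measurable _).aestronglyMeasurable
    (Eventually.of_forall (norm_exp_neg_mul_div_add_I_le u))

lemma norm_scaledExpIntegral_le {u : ℝ} (hu : 0 < u) : ‖scaledExpIntegral u‖ ≤ u⁻¹ := by
  rw [← integral_exp_neg_mul_Ioi_zero hu]
  exact norm_integral_le_of_norm_le (exp_neg_integrableOn_Ioi 0 hu)
    (Eventually.of_forall (norm_exp_neg_mul_div_add_I_le u))

lemma re_scaledExpIntegral {u : ℝ} (hu : 0 < u) :
    (scaledExpIntegral u).re = ∫ s in Ioi (0 : ℝ), Real.exp (-u * s) * (s / (s ^ 2 + 1)) := by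
  refine (integral_re (integrableOn_exp_neg_mul_div_add_I hu)).symm.trans ?_
  congr 1 with s
  have exp_ofReal : Complex.exp (-u * s) = (Real.exp (-u * s) : ℝ) := by push_cast; rfl
  rw [exp_ofReal, div_eq_mul_inv, RCLike.re_to_complex, Complex.re_ofReal_mul, Complex.inv_re]
  simp [Complex.normSq_apply, sq]

lemma integrable_exp_neg_add_I_mul_prod {u : ℝ} (hu : 0 < u) (R : ℝ) :
    Integrable (fun p : ℝ × ℝ => Complex.exp (-(p.2 + Complex.I) * p.1))
      ((volume.restrict (Ioc u R)).prod (volume.restrict (Ioi 0))) := by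
  refine ((exp_neg_integrableOn_Ioi 0 hu).integrable.comp_snd _).mono' (by fun_prop) ?_
  rw [Measure.prod_restrict]
  filter_upwards [ae_restrict_mem (measurableSet_Ioc.prod measurableSet_Ioi)]
    with ⟨t, s⟩ ⟨⟨hut, _⟩, (hs : 0 < s)⟩
  have exponent_re : (-((s : ℂ) + Complex.I) * t).re = -s * t := by simp
  rw [Complex.norm_exp, exponent_re, Real.exp_le_exp, neg_mul, neg_mul, neg_le_neg_iff, mul_comm s]
  exact mul_le_mul_of_nonneg_right hut.le hs.le

lemma intervalIntegral_exp_neg_I_mul_div {u R : ℝ} (hu : 0 < u) (hR : u ≤ R) :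
    ∫ t in u..R, Complex.exp (-Complex.I * t) / t =
      Complex.exp (-Complex.I * u) * scaledExpIntegral u -
        Complex.exp (-Complex.I * R) * scaledExpIntegral R := by
  have laplace_one {t : ℝ} (ht : 0 < t) : Complex.exp (-Complex.I * t) / t =
      ∫ s in Ioi (0 : ℝ), Complex.exp (-(s + Complex.I) * t) := by
    have factor (s : ℝ) : Complex.exp (-(s + Complex.I) * t) =
        Complex.exp (-Complex.I * t) * Complex.exp (-t * s) := by
      rw [← Complex.exp_add]; ring_nf
    simp_rw [factor]
    rw [integral_const_mul, integral_exp_mul_complex_Ioi (by simpa using ht)]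
    simp [div_eq_mul_inv]
  have antiderivative (s : ℝ) : ∫ t in u..R, Complex.exp (-(s + Complex.I) * t) =
      Complex.exp (-Complex.I * u) * (Complex.exp (-u * s) / (s + Complex.I)) -
        Complex.exp (-Complex.I * R) * (Complex.exp (-R * s) / (s + Complex.I)) := by
    rw [integral_exp_mul_complex (neg_ne_zero.2 (ofReal_add_I_ne_zero s)), mul_div_assoc',
      mul_div_assoc', ← Complex.exp_add, ← Complex.exp_add, div_neg, ← neg_div, neg_sub, sub_div]
    ring_nf
  calc ∫ t in u..R, Complex.exp (-Complex.I * t) / t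
      = ∫ t in u..R, ∫ s in Ioi (0 : ℝ), Complex.exp (-(s + Complex.I) * t) :=
        intervalIntegral.integral_congr fun t ht =>
          laplace_one (hu.trans_le (uIcc_of_le hR ▸ ht).1)
    _ = ∫ s in Ioi (0 : ℝ), ∫ t in u..R, Complex.exp (-(s + Complex.I) * t) :=
        intervalIntegral_integral_swap
          (by rw [uIoc_of_le hR]; exact integrable_exp_neg_add_I_mul_prod hu R)
    _ = _ := by
        simp_rw [antiderivative]
        rw [integral_sub ((integrableOn_exp_neg_mul_div_add_I hu).const_mul _)
          ((integrableOn_exp_neg_mul_div_add_I (hu.trans_le hR)).const_mul _),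
          integral_const_mul, integral_const_mul, scaledExpIntegral, scaledExpIntegral]

lemma tendsto_intervalIntegral_exp_neg_I_mul_div {u : ℝ} (hu : 0 < u) :
    Tendsto (fun R : ℝ => ∫ t in u..R, Complex.exp (-Complex.I * t) / t) atTop
      (𝓝 (Complex.exp (-Complex.I * u) * scaledExpIntegral u)) := by
  have boundary_term : Tendsto (fun R : ℝ => Complex.exp (-Complex.I * R) * scaledExpIntegral R)
      atTop (𝓝 0) := by
    refine squeeze_zero_norm' ?_ tendsto_inv_atTop_zero
    filter_upwards [eventually_gt_atTop 0] with R hR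
    simpa [Complex.norm_exp] using norm_scaledExpIntegral_le hR
  rw [← sub_zero (Complex.exp _ * _)]
  refine (boundary_term.const_sub _).congr' ?_
  filter_upwards [eventually_ge_atTop u] with R hR
  exact (intervalIntegral_exp_neg_I_mul_div hu hR).symm

lemma intervalIntegrable_exp_neg_I_mul_div {u R : ℝ} (hu : 0 < u) (hR : u ≤ R) :
    IntervalIntegrable (fun t : ℝ => Complex.exp (-Complex.I * t) / t) volume u R := by
  refine ContinuousOn.intervalIntegrable (ContinuousOn.div (by fun_prop) (by fun_prop) ?_)
  intro t ht
  rw [uIcc_of_le hR] at ht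
  exact Complex.ofReal_ne_zero.2 (hu.trans_le ht.1).ne'

lemma tendsto_intervalIntegral_comp_exp_neg_I_mul_div {u : ℝ} (hu : 0 < u) (L : ℂ →L[ℝ] ℝ) :
    Tendsto (fun R : ℝ => ∫ t in u..R, L (Complex.exp (-Complex.I * t) / t)) atTop
      (𝓝 (L (Complex.exp (-Complex.I * u) * scaledExpIntegral u))) := by
  refine ((L.continuous.tendsto _).comp (tendsto_intervalIntegral_exp_neg_I_mul_div hu)).congr' ?_
  filter_upwards [eventually_ge_atTop u] with R hR
  exact (L.intervalIntegral_comp_comm (intervalIntegrable_exp_neg_I_mul_div hu hR)).symm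

lemma ci_eq_neg_re_scaledExpIntegral {u : ℝ} (hu : 0 < u) :
    ci u = -(Complex.exp (-Complex.I * u) * scaledExpIntegral u).re := by
  have cos_div (t : ℝ) : Real.cos t / t = Complex.reCLM (Complex.exp (-Complex.I * t) / t) := by
    simp [Complex.exp_re]
  simp_rw [ci, cos_div]
  rw [(tendsto_intervalIntegral_comp_exp_neg_I_mul_div hu _).limUnder_eq, Complex.reCLM_apply]

lemma si_eq_im_scaledExpIntegral {u : ℝ} (hu : 0 < u) :
    si u = (Complex.exp (-Complex.I * u) * scaledExpIntegral u).im := by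
  have sin_div (t : ℝ) : Real.sin t / t =
      (-Complex.imCLM) (Complex.exp (-Complex.I * t) / t) := by
    simp [Complex.exp_im, neg_div]
  simp_rw [si, sin_div]
  rw [(tendsto_intervalIntegral_comp_exp_neg_I_mul_div hu _).limUnder_eq]
  simp only [neg_apply, Complex.imCLM_apply, neg_neg]

lemma Tker_eq_neg_re_scaledExpIntegral {a x : ℝ} (ha : 0 < a) (hx : x ≠ 0) :
    Tker a x = -(scaledExpIntegral (a * |x|)).re := by
  have hu : 0 < a * |x| := mul_pos ha (abs_pos.2 hx)
  have exp_neg_I_mul (u : ℝ) : Complex.exp (-Complex.I * u) = ⟨Real.cos u, -Real.sin u⟩ :=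
    Complex.ext (by simp [Complex.exp_re]) (by simp [Complex.exp_im])
  rw [Tker, si_eq_im_scaledExpIntegral hu, ci_eq_neg_re_scaledExpIntegral hu]
  simp only [exp_neg_I_mul, Complex.mul_re, Complex.mul_im]
  linear_combination
    -(scaledExpIntegral (a * |x|)).re * Real.sin_sq_add_cos_sq (a * |x|)

end ExponentialIntegral

/-- The Poisson kernel of the upper half-plane at height `s`, without its factor `1 / (2π)`: the
Fourier transform of `e ^ (-s|ξ|)`. -/
noncomputable def halfPlanePoissonKernel (s y : ℝ) : ℝ := 2 * s / (s ^ 2 + y ^ 2)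

section PoissonKernel

@[fun_prop]
lemma measurable_halfPlanePoissonKernel {α : Type*} [MeasurableSpace α] {u v : α → ℝ}
    (hu : Measurable u) (hv : Measurable v) :
    Measurable fun p => halfPlanePoissonKernel (u p) (v p) := by
  unfold halfPlanePoissonKernel
  fun_prop

lemma halfPlanePoissonKernel_sub_comm (s x t : ℝ) :
    halfPlanePoissonKernel s (x - t) = halfPlanePoissonKernel s (t - x) := by
  rw [halfPlanePoissonKernel, halfPlanePoissonKernel, sub_sq_comm]

lemma norm_halfPlanePoissonKernel_le (s : ℝ) {x : ℝ} (hx : x ≠ 0) :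
    ‖halfPlanePoissonKernel s x‖ ≤ |x|⁻¹ := by
  have hx' : 0 < |x| := abs_pos.2 hx
  rw [halfPlanePoissonKernel, Real.norm_eq_abs, abs_div,
    abs_of_pos (by positivity : 0 < s ^ 2 + x ^ 2), div_le_iff₀ (by positivity), inv_mul_eq_div,
    le_div_iff₀ hx', abs_mul, abs_two, ← sq_abs s, ← sq_abs x]
  exact two_mul_le_add_sq |s| |x|

variable {s : ℝ}

lemma halfPlanePoissonKernel_nonneg (hs : 0 ≤ s) (y : ℝ) : 0 ≤ halfPlanePoissonKernel s y := by
  unfold halfPlanePoissonKernel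
  positivity

lemma integral_exp_neg_mul_abs (hs : 0 < s) : ∫ ξ : ℝ, Real.exp (-s * |ξ|) = 2 / s := by
  rw [integral_comp_abs (f := fun ξ => Real.exp (-s * ξ)), integral_exp_neg_mul_Ioi_zero hs,
    div_eq_mul_inv]

lemma integrable_exp_neg_mul_abs (hs : 0 < s) : Integrable fun ξ : ℝ => Real.exp (-s * |ξ|) :=
  Integrable.of_integral_ne_zero (by rw [integral_exp_neg_mul_abs hs]; positivity)

lemma integrable_exp_neg_mul_abs_mul_exp (hs : 0 < s) (y : ℝ) : Integrable fun ξ : ℝ =>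
    (Real.exp (-s * |ξ|) : ℂ) * Complex.exp (Complex.I * ξ * y) :=
  (integrable_exp_neg_mul_abs hs).ofReal.mul_bdd (c := 1) (by fun_prop)
    (Eventually.of_forall fun ξ => by simp [Complex.norm_exp])

lemma integral_exp_neg_mul_abs_mul_exp (hs : 0 < s) (y : ℝ) :
    ∫ ξ : ℝ, (Real.exp (-s * |ξ|) : ℂ) * Complex.exp (Complex.I * ξ * y) =
      (halfPlanePoissonKernel s y : ℂ) := by
  have left_half :
      ∫ ξ in Iic (0 : ℝ), (Real.exp (-s * |ξ|) : ℂ) * Complex.exp (Complex.I * ξ * y) =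
        1 / (s + Complex.I * y) := by
    rw [setIntegral_congr_fun (g := fun ξ : ℝ => Complex.exp ((s + Complex.I * y) * ξ))
      measurableSet_Iic, integral_exp_mul_complex_Iic (by simpa using hs)]
    · rw [Complex.ofReal_zero, mul_zero, Complex.exp_zero]
    · intro ξ (hξ : ξ ≤ 0)
      simp only [abs_of_nonpos hξ, Complex.ofReal_exp, ← Complex.exp_add]
      push_cast
      ring_nf
  have right_half :
      ∫ ξ in Ioi (0 : ℝ), (Real.exp (-s * |ξ|) : ℂ) * Complex.exp (Complex.I * ξ * y) =
        1 / (s - Complex.I * y) := by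
    rw [setIntegral_congr_fun (g := fun ξ : ℝ => Complex.exp (-(s - Complex.I * y) * ξ))
      measurableSet_Ioi, integral_exp_mul_complex_Ioi (by simpa using hs)]
    · rw [neg_div_neg_eq, Complex.ofReal_zero, mul_zero, Complex.exp_zero]
    · intro ξ (hξ : 0 < ξ)
      simp only [abs_of_pos hξ, Complex.ofReal_exp, ← Complex.exp_add]
      push_cast
      ring_nf
  have left_ne_zero : (s : ℂ) + Complex.I * y ≠ 0 :=
    fun h => hs.ne' (by simpa using congrArg Complex.re h)
  have right_ne_zero : (s : ℂ) - Complex.I * y ≠ 0 :=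
    fun h => hs.ne' (by simpa using congrArg Complex.re h)
  have factorization : (s : ℂ) ^ 2 + y ^ 2 = (s + Complex.I * y) * (s - Complex.I * y) := by
    linear_combination (y : ℂ) ^ 2 * Complex.I_sq
  rw [← intervalIntegral.integral_Iic_add_Ioi (b := 0)
    (integrable_exp_neg_mul_abs_mul_exp hs y).integrableOn
    (integrable_exp_neg_mul_abs_mul_exp hs y).integrableOn, left_half, right_half,
    halfPlanePoissonKernel]
  push_cast
  rw [factorization]
  field_simp
  ring

lemma integral_halfPlanePoissonKernel (hs : 0 < s) :
    ∫ y : ℝ, halfPlanePoissonKernel s y = 2 * Real.pi := by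
  lift s to NNReal using hs.le
  have eq_cauchyPDFReal (y : ℝ) : halfPlanePoissonKernel s y =
      2 * Real.pi * ProbabilityTheory.cauchyPDFReal 0 s y := by
    rw [halfPlanePoissonKernel, ProbabilityTheory.cauchyPDFReal_def, sub_zero]
    field_simp
    ring
  simp_rw [eq_cauchyPDFReal]
  rw [integral_const_mul,
    ProbabilityTheory.integral_cauchyPDFReal_eq_one 0 (NNReal.coe_pos.1 hs).ne', mul_one]

lemma integrable_halfPlanePoissonKernel (hs : 0 < s) :
    Integrable (halfPlanePoissonKernel s) :=
  Integrable.of_integral_ne_zero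
    (by rw [integral_halfPlanePoissonKernel hs]; exact Real.two_pi_pos.ne')

lemma integral_exp_neg_mul_abs_mul_integral_mul_exp {f : ℝ → ℂ} (hf : Integrable f)
    (hs : 0 < s) (x : ℝ) :
    ∫ ξ : ℝ, (Real.exp (-s * |ξ|) : ℂ) * ((∫ t : ℝ, f t * Complex.exp (Complex.I * ξ * t)) *
        Complex.exp (-(Complex.I * ξ * x))) =
      ∫ t : ℝ, (halfPlanePoissonKernel s (x - t) : ℂ) * f t := by
  have integrable_prod : Integrable (Function.uncurry fun ξ t : ℝ =>
      (Real.exp (-s * |ξ|) : ℂ) * f t * Complex.exp (Complex.I * ξ * (t - x : ℝ)))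
      (volume.prod volume) :=
    ((integrable_exp_neg_mul_abs hs).ofReal.mul_prod hf).mul_bdd (c := 1)
      (by fun_prop : Continuous _).aestronglyMeasurable
      (Eventually.of_forall fun p => by simp [Complex.norm_exp])
  calc _ = ∫ ξ : ℝ, ∫ t : ℝ,
          (Real.exp (-s * |ξ|) : ℂ) * f t * Complex.exp (Complex.I * ξ * (t - x : ℝ)) := by
        congr 1 with ξ
        rw [← integral_mul_const, ← integral_const_mul]
        congr 1 with t
        rw [mul_assoc (f t), ← Complex.exp_add]
        push_cast
        ring_nf
    _ = ∫ t : ℝ, ∫ ξ : ℝ,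
          (Real.exp (-s * |ξ|) : ℂ) * f t * Complex.exp (Complex.I * ξ * (t - x : ℝ)) :=
        integral_integral_swap integrable_prod
    _ = _ := by
        congr 1 with t
        simp_rw [mul_right_comm _ (f t)]
        rw [integral_mul_const, integral_exp_neg_mul_abs_mul_exp hs,
          halfPlanePoissonKernel_sub_comm]

end PoissonKernel

section LaplaceRepresentation

variable {a x : ℝ}

lemma integrableOn_exp_neg_mul_mul_halfPlanePoissonKernel (ha : 0 < a) (hx : x ≠ 0) :
    IntegrableOn (fun s : ℝ => Real.exp (-a * s) * halfPlanePoissonKernel s x) (Ioi 0) :=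
  (exp_neg_integrableOn_Ioi 0 ha).integrable.mul_bdd
    (by fun_prop : Measurable _).aestronglyMeasurable
    (Eventually.of_forall fun s => norm_halfPlanePoissonKernel_le s hx)

lemma integral_exp_neg_mul_mul_halfPlanePoissonKernel (ha : 0 < a) (hx : x ≠ 0) :
    ∫ s in Ioi (0 : ℝ), Real.exp (-a * s) * halfPlanePoissonKernel s x = -2 * Tker a x := by
  have hx' : 0 < |x| := abs_pos.2 hx
  have substitution := integral_comp_mul_left_Ioi
    (fun s => Real.exp (-a * s) * halfPlanePoissonKernel s x) 0 hx'
  rw [mul_zero, smul_eq_mul, eq_inv_mul_iff_mul_eq₀ hx'.ne'] at substitution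
  rw [← substitution, Tker_eq_neg_re_scaledExpIntegral ha hx,
    re_scaledExpIntegral (mul_pos ha hx'), neg_mul_neg, ← integral_const_mul, ← integral_const_mul]
  congr 1 with s
  rw [halfPlanePoissonKernel, mul_pow, sq_abs, ← mul_add_one, ← sq_abs x, ← mul_assoc,
    neg_mul, neg_mul, mul_assoc a]
  field_simp

lemma integrable_Tker (ha : 0 < a) : Integrable (Tker a) := by
  have integrable_prod : Integrable
      (fun p : ℝ × ℝ => Real.exp (-a * p.2) * halfPlanePoissonKernel p.2 p.1)
      (volume.prod (volume.restrict (Ioi 0))) := by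
    rw [integrable_prod_iff' (by fun_prop : Measurable _).aestronglyMeasurable]
    refine ⟨?_, ?_⟩
    · filter_upwards [ae_restrict_mem measurableSet_Ioi] with s hs
      exact (integrable_halfPlanePoissonKernel hs).const_mul _
    · refine ((exp_neg_integrableOn_Ioi 0 ha).mul_const (2 * Real.pi)).congr ?_
      filter_upwards [ae_restrict_mem measurableSet_Ioi] with s (hs : 0 < s)
      rw [← integral_halfPlanePoissonKernel hs, ← integral_const_mul]
      congr 1 with y
      rw [Real.norm_of_nonneg
        (mul_nonneg (Real.exp_pos _).le (halfPlanePoissonKernel_nonneg hs.le y))]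
  refine (integrable_prod.integral_prod_left.const_mul (-2)⁻¹).congr ?_
  filter_upwards [volume.ae_ne 0] with y hy
  rw [integral_exp_neg_mul_mul_halfPlanePoissonKernel ha hy]
  ring

lemma integral_exp_neg_mul_mul_integral_halfPlanePoissonKernel_mul (ha : 0 < a) {f : ℝ → ℂ}
    (hf : Integrable f) (hT : Integrable fun t => (Tker a (x - t) : ℂ) * f t) :
    ∫ s in Ioi (0 : ℝ), (Real.exp (-a * s) : ℂ) *
        ∫ t : ℝ, (halfPlanePoissonKernel s (x - t) : ℂ) * f t =
      -2 * ∫ t : ℝ, (Tker a (x - t) : ℂ) * f t := by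
  have ae_ne : ∀ᵐ t : ℝ, x - t ≠ 0 := by
    filter_upwards [volume.ae_ne x] with t ht using sub_ne_zero.2 ht.symm
  have laplace : (fun t =>
        (∫ s in Ioi (0 : ℝ), Real.exp (-a * s) * halfPlanePoissonKernel s (x - t)) • f t) =ᵐ[volume]
      fun t => -2 * ((Tker a (x - t) : ℂ) * f t) := by
    filter_upwards [ae_ne] with t ht
    rw [integral_exp_neg_mul_mul_halfPlanePoissonKernel ha ht, Complex.real_smul]
    push_cast
    ring
  rw [← integral_const_mul, ← integral_congr_ae laplace, integral_integral_smul_swap_of_nonneg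
    (by fun_prop : Measurable _).aestronglyMeasurable ?_ ?_ hf.1
    ((hT.const_mul _).congr laplace.symm)]
  · congr 1 with s
    rw [← integral_const_mul]
    congr 1 with t
    rw [Complex.real_smul]
    push_cast
    ring
  · refine Eventually.of_forall fun t => ?_
    filter_upwards [ae_restrict_mem measurableSet_Ioi] with s (hs : 0 < s)
    exact mul_nonneg (Real.exp_pos _).le (halfPlanePoissonKernel_nonneg hs.le _)
  · filter_upwards [ae_ne] with t ht using integrableOn_exp_neg_mul_mul_halfPlanePoissonKernel ha ht

end LaplaceRepresentation

section Multiplier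

variable {a x : ℝ}

lemma integral_div_abs_add_mul (ha : 0 < a) {φ : ℝ → ℂ}
    (hint : Integrable fun ξ : ℝ => ((a / (|ξ| + a) : ℝ) : ℂ) * φ ξ) :
    ∫ ξ : ℝ, ((a / (|ξ| + a) : ℝ) : ℂ) * φ ξ =
      a * ∫ s in Ioi (0 : ℝ), (Real.exp (-a * s) : ℂ) *
        ∫ ξ : ℝ, (Real.exp (-s * |ξ|) : ℂ) * φ ξ := by
  have rate_pos (ξ : ℝ) : 0 < |ξ| + a := by positivity
  have laplace (ξ : ℝ) : ((a / (|ξ| + a) : ℝ) : ℂ) * φ ξ =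
      a * ((∫ s in Ioi (0 : ℝ), Real.exp (-(|ξ| + a) * s)) • φ ξ) := by
    rw [integral_exp_neg_mul_Ioi_zero (rate_pos ξ), Complex.real_smul, div_eq_mul_inv,
      Complex.ofReal_mul, mul_assoc]
  have hφ : AEStronglyMeasurable φ := by
    have inverse_meas : AEStronglyMeasurable fun ξ : ℝ => (((|ξ| + a) / a : ℝ) : ℂ) :=
      (by fun_prop : Continuous _).aestronglyMeasurable
    refine (inverse_meas.mul hint.1).congr (Eventually.of_forall fun ξ => ?_)
    rw [Pi.mul_apply, ← mul_assoc, ← Complex.ofReal_mul, div_mul_div_cancel₀ ha.ne',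
      div_self (rate_pos ξ).ne', Complex.ofReal_one, one_mul]
  simp only [laplace] at hint ⊢
  rw [integral_const_mul, integral_integral_smul_swap_of_nonneg
    (by fun_prop : Measurable _).aestronglyMeasurable
    (Eventually.of_forall fun ξ => Eventually.of_forall fun s => (Real.exp_pos _).le)
    (Eventually.of_forall fun ξ => exp_neg_integrableOn_Ioi 0 (rate_pos ξ)) hφ
    ((integrable_const_mul_iff (Complex.ofReal_ne_zero.2 ha.ne').isUnit _).1 hint)]
  congr 2 with s
  rw [← integral_const_mul]
  congr 1 with ξ
  rw [Complex.real_smul, ← mul_assoc, ← Complex.ofReal_mul, ← Real.exp_add]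
  ring_nf

lemma integrable_div_abs_add_mul (ha : 0 < a) {φ : ℝ → ℂ} (hφ : Integrable φ) :
    Integrable fun ξ : ℝ => ((a / (|ξ| + a) : ℝ) : ℂ) * φ ξ := by
  refine hφ.bdd_mul (c := 1) (by fun_prop : Measurable _).aestronglyMeasurable
    (Eventually.of_forall fun ξ => ?_)
  rw [Complex.norm_real, Real.norm_of_nonneg (by positivity), div_le_one (by positivity)]
  exact le_add_of_nonneg_left (abs_nonneg ξ)

theorem stmt18_general (ha : 0 < a) {f : ℝ → ℂ} (hf : Integrable f)
    (hF : Integrable fun ξ : ℝ => ((a / (|ξ| + a) : ℝ) : ℂ) *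
      ∫ y : ℝ, f y * Complex.exp (Complex.I * ξ * y))
    (hT : Integrable fun t => (Tker a (x - t) : ℂ) * f t) :
    (1 / (2 * (Real.pi : ℂ))) *
        ∫ ξ : ℝ, ((a / (|ξ| + a) : ℝ) : ℂ) * (∫ y : ℝ, f y * Complex.exp (Complex.I * ξ * y)) *
          Complex.exp (-(Complex.I * ξ * x)) =
      -(a / Real.pi) * ∫ t : ℝ, (Tker a (x - t) : ℂ) * f t := by
  have hint : Integrable fun ξ : ℝ => ((a / (|ξ| + a) : ℝ) : ℂ) *
      ((∫ y : ℝ, f y * Complex.exp (Complex.I * ξ * y)) * Complex.exp (-(Complex.I * ξ * x))) := by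
    simp_rw [← mul_assoc]
    exact hF.mul_bdd (c := 1) (by fun_prop)
      (Eventually.of_forall fun ξ => by simp [Complex.norm_exp])
  have poisson := setIntegral_congr_fun (μ := volume) (measurableSet_Ioi (a := (0 : ℝ)))
    fun s (hs : 0 < s) => congrArg ((Real.exp (-a * s) : ℂ) * ·)
      (integral_exp_neg_mul_abs_mul_integral_mul_exp hf hs x)
  simp_rw [mul_assoc _ (∫ _, _)]
  rw [integral_div_abs_add_mul ha hint, poisson,
    integral_exp_neg_mul_mul_integral_halfPlanePoissonKernel_mul ha hf hT]
  field_simp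

end Multiplier

section Schwartz

open FourierTransform

lemma integral_mul_exp_eq_fourier (f : ℝ → ℂ) (ξ : ℝ) :
    ∫ y : ℝ, f y * Complex.exp (Complex.I * ξ * y) = 𝓕 f (-(1 / (2 * Real.pi)) * ξ) := by
  rw [Real.fourier_real_eq_integral_exp_smul]
  congr 1 with y
  rw [smul_eq_mul, mul_comm]
  congr 2
  have := Complex.ofReal_ne_zero.2 Real.pi_ne_zero
  push_cast
  field_simp

variable {a : ℝ} (f : SchwartzMap ℝ ℝ)

lemma integrable_integral_schwartz_mul_exp :
    Integrable fun ξ : ℝ => ∫ y : ℝ, (f y : ℂ) * Complex.exp (Complex.I * ξ * y) := by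
  simp_rw [integral_mul_exp_eq_fourier]
  exact (𝓕 (f.postcompCLM Complex.ofRealCLM)).integrable.comp_mul_left'
    (neg_ne_zero.2 (one_div_ne_zero Real.two_pi_pos.ne'))

lemma integrable_Tker_mul_schwartz (ha : 0 < a) (x : ℝ) :
    Integrable fun t => (Tker a (x - t) : ℂ) * (f t : ℂ) :=
  ((integrable_Tker ha).comp_sub_left x).ofReal.mul_bdd (c := SchwartzMap.seminorm ℝ 0 0 f)
    (by fun_prop : Continuous _).aestronglyMeasurable
    (Eventually.of_forall fun t => by
      rw [Complex.norm_real]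
      exact f.norm_le_seminorm ℝ t)

end Schwartz

/-- for a Schwartz function `f` with Fourier transform
`f̃(ξ) = ∫ f(x) e^{iξx} dx`, the inverse transform of `[a/(|ξ|+a)]·f̃(ξ)`
equals `-(a/π)·(T_a ∗ f)(x)`. -/
theorem stmt18 (a : ℝ) (ha : 0 < a) (f : SchwartzMap ℝ ℝ) (x : ℝ) :
    (1 / (2 * (Real.pi : ℂ))) *
        ∫ ξ : ℝ, ((a / (|ξ| + a) : ℝ) : ℂ) *
          (∫ y : ℝ, (f y : ℂ) * Complex.exp (Complex.I * ξ * y)) *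
          Complex.exp (-(Complex.I * ξ * x))
      = ((-(a / Real.pi) * ∫ t : ℝ, Tker a (x - t) * f t : ℝ) : ℂ) := by
  exact_mod_cast stmt18_general (f := fun y => (f y : ℂ)) ha f.integrable.ofReal
    (integrable_div_abs_add_mul ha (integrable_integral_schwartz_mul_exp f))
    (integrable_Tker_mul_schwartz f ha x)
end
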